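/- arXiv:2201.06183 — 13 statements merged into one kernel-verified Lean document; each statement's English description precedes it below -/
import Mathlib

section
/- Let (M, a, p) be a rebalancing problem. For a column index j let I_j = { i : M_{ij} > 0 }, and for a row index i let J_i = { j : M_{ij} > 0 }. Then there exists a dollar-allocation A for (M, a, p) satisfying A_{ij} = 0 whenever M_{ij} = 0 if and only if the following two conditions hold: (1) for every subset J ⊆ {1, …, n}, ∑_{i ∈ ∪_{j∈J} I_j} a_i ≥ ∑_{j∈J} p_j; and (2) for every subset I ⊆ {1, …, m}, ∑_{j ∈ ∪_{i∈I} J_i} p_j ≥ ∑_{i∈I} a_i. -/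
open Classical in
/-- Necessity of a Hall-type condition. -/
theorem hall_necessity {α β : Type*} [Fintype α] [Fintype β]
    (M A : α → β → ℝ) (a : α → ℝ) (p : β → ℝ) (hM : ∀ i j, 0 ≤ M i j)
    (hA : ∀ i j, 0 ≤ A i j) (hr : ∀ i, ∑ j, A i j = a i) (hc : ∀ j, ∑ i, A i j = p j)
    (hz : ∀ i j, M i j = 0 → A i j = 0) (J : Finset β) :
    ∑ j ∈ J, p j ≤ ∑ i ∈ Finset.univ.filter (fun i => ∃ j ∈ J, 0 < M i j), a i := by
  have h1 : ∑ j ∈ J, p j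
      = ∑ j ∈ J, ∑ i ∈ Finset.univ.filter (fun i => ∃ j ∈ J, 0 < M i j), A i j := by
    refine Finset.sum_congr rfl fun j hj => ?_
    rw [← hc j]
    symm
    refine Finset.sum_subset (Finset.subset_univ _) fun i _ hi => ?_
    apply hz
    by_contra hne
    apply hi
    simp only [Finset.mem_filter, Finset.mem_univ, true_and]
    exact ⟨j, hj, lt_of_le_of_ne (hM i j) (Ne.symm hne)⟩
  rw [h1, Finset.sum_comm]
  refine Finset.sum_le_sum fun i _ => ?_
  rw [← hr i]
  exact Finset.sum_le_sum_of_subset_of_nonneg (Finset.subset_univ _) fun j _ _ => hA i j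

theorem layer_term_integral (R v p : ℝ) (h1 : -R ≤ v) (h2 : v ≤ R) :
    ∫ t in (-R)..R, Set.indicator {x | x ≤ v} (fun _ => p) t = (v + R) * p := by
  rw [intervalIntegral.integral_indicator ⟨h1, h2⟩]
  simp

theorem layer_term_integrable (R v p : ℝ) :
    IntervalIntegrable (fun t => Set.indicator {x | x ≤ v} (fun _ => p) t)
      MeasureTheory.volume (-R) R := by
  have : IntervalIntegrable (fun _ : ℝ => p) MeasureTheory.volume (-R) R :=
    intervalIntegrable_const
  exact ⟨this.1.indicator measurableSet_Iic, this.2.indicator measurableSet_Iic⟩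

theorem layer_cake {α β : Type*} [Fintype α] [Fintype β]
    (a w : α → ℝ) (p v : β → ℝ) (hsum : ∑ i, a i = ∑ j, p j)
    (h : ∀ t : ℝ, ∑ j, Set.indicator {x | x ≤ v j} (fun _ => p j) t
      ≤ ∑ i, Set.indicator {x | x ≤ w i} (fun _ => a i) t) :
    ∑ j, v j * p j ≤ ∑ i, w i * a i := by
  set R : ℝ := ∑ j, |v j| + ∑ i, |w i| with hR
  have hv0 : 0 ≤ ∑ j, |v j| := Finset.sum_nonneg fun _ _ => abs_nonneg _
  have hw0 : 0 ≤ ∑ i, |w i| := Finset.sum_nonneg fun _ _ => abs_nonneg _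
  have hv : ∀ j, |v j| ≤ R := fun j => by
    have := Finset.single_le_sum (f := fun j => |v j|) (fun _ _ => abs_nonneg _)
      (Finset.mem_univ j)
    linarith
  have hw : ∀ i, |w i| ≤ R := fun i => by
    have := Finset.single_le_sum (f := fun i => |w i|) (fun _ _ => abs_nonneg _)
      (Finset.mem_univ i)
    linarith
  have key : ∫ t in (-R)..R, ∑ j, Set.indicator {x | x ≤ v j} (fun _ => p j) t
      ≤ ∫ t in (-R)..R, ∑ i, Set.indicator {x | x ≤ w i} (fun _ => a i) t := by
    refine intervalIntegral.integral_mono_on (by linarith) ?_ ?_ fun t _ => h t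
    · have := IntervalIntegrable.sum (μ := MeasureTheory.volume) (a := -R) (b := R) Finset.univ
        (f := fun j t => Set.indicator {x | x ≤ v j} (fun _ => p j) t)
        (fun j _ => layer_term_integrable R (v j) (p j))
      rwa [Finset.sum_fn] at this
    · have := IntervalIntegrable.sum (μ := MeasureTheory.volume) (a := -R) (b := R) Finset.univ
        (f := fun j t => Set.indicator {x | x ≤ w j} (fun _ => a j) t)
        (fun j _ => layer_term_integrable R (w j) (a j))
      rwa [Finset.sum_fn] at this
  rw [intervalIntegral.integral_finsetSum (fun j _ => layer_term_integrable R (v j) (p j)),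
    intervalIntegral.integral_finsetSum (fun j _ => layer_term_integrable R (w j) (a j))] at key
  rw [Finset.sum_congr rfl (fun j _ => layer_term_integral R (v j) (p j)
      (abs_le.1 (hv j)).1 (abs_le.1 (hv j)).2),
    Finset.sum_congr rfl (fun j _ => layer_term_integral R (w j) (a j)
      (abs_le.1 (hw j)).1 (abs_le.1 (hw j)).2)] at key
  simp only [add_mul, Finset.sum_add_distrib, ← Finset.mul_sum, hsum] at key
  linarith

/-- The nonnegative matrices supported on the support of `M` with total mass `S`. -/
def supportSimplex {m n : ℕ} (M : Fin m → Fin n → ℝ) (S : ℝ) : Set (Fin m → Fin n → ℝ) :=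
  {A | (∀ i j, 0 ≤ A i j) ∧ (∀ i j, M i j = 0 → A i j = 0) ∧ ∑ i, ∑ j, A i j = S}

theorem supportSimplex_convex {m n : ℕ} (M : Fin m → Fin n → ℝ) (S : ℝ) :
    Convex ℝ (supportSimplex M S) := by
  rintro A ⟨hA, hA', hA''⟩ B ⟨hB, hB', hB''⟩ s t hs ht hst
  refine ⟨fun i j => ?_, fun i j h => ?_, ?_⟩
  · have := hA i j
    have := hB i j
    simp only [Pi.add_apply, Pi.smul_apply, smul_eq_mul]
    positivity
  · simp [hA' i j h, hB' i j h]
  · simp only [Pi.add_apply, Pi.smul_apply, smul_eq_mul, Finset.sum_add_distrib,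
      ← Finset.mul_sum, hA'', hB'']
    rw [← add_mul, hst, one_mul]

theorem supportSimplex_compact {m n : ℕ} (M : Fin m → Fin n → ℝ) (S : ℝ) :
    IsCompact (supportSimplex M S) := by
  have hK : IsCompact (Set.Icc (0 : Fin m → Fin n → ℝ) (fun _ _ => S)) := isCompact_Icc
  refine hK.of_isClosed_subset ?_ ?_
  · have e : supportSimplex M S = (⋂ i, ⋂ j, {A | 0 ≤ A i j}) ∩
        ((⋂ i, ⋂ j, ⋂ (_ : M i j = 0), {A | A i j = 0}) ∩ {A | ∑ i, ∑ j, A i j = S}) := by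
      ext A
      simp [supportSimplex]
    rw [e]
    refine IsClosed.inter ?_ (IsClosed.inter ?_ ?_)
    · exact isClosed_iInter fun i => isClosed_iInter fun j =>
        isClosed_le (by fun_prop) (by fun_prop)
    · exact isClosed_iInter fun i => isClosed_iInter fun j => isClosed_iInter fun _ =>
        isClosed_eq (by fun_prop) (by fun_prop)
    · exact isClosed_eq (by fun_prop) (by fun_prop)
  · rintro A ⟨hA, -, hS⟩
    refine ⟨fun i j => hA i j, fun i j => ?_⟩
    rw [← hS]
    calc A i j ≤ ∑ j, A i j :=
          Finset.single_le_sum (f := fun j => A i j) (fun j _ => hA i j) (Finset.mem_univ j)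
      _ ≤ _ := Finset.single_le_sum (f := fun i => ∑ j, A i j)
          (fun i _ => Finset.sum_nonneg fun j _ => hA i j) (Finset.mem_univ i)

/-- The marginals of a matrix. -/
def marginals (m n : ℕ) : (Fin m → Fin n → ℝ) →ₗ[ℝ] (Fin m → ℝ) × (Fin n → ℝ) where
  toFun A := (fun i => ∑ j, A i j, fun j => ∑ i, A i j)
  map_add' A B := by
    ext <;> simp [Finset.sum_add_distrib]
  map_smul' c A := by
    ext <;> simp [Finset.mul_sum]

theorem functional_repr {m n : ℕ} (f : (Fin m → ℝ) × (Fin n → ℝ) →L[ℝ] ℝ)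
    (x : Fin m → ℝ) (y : Fin n → ℝ) :
    f (x, y) = ∑ i, x i * f (Pi.single i 1, 0) + ∑ j, y j * f (0, Pi.single j 1) := by
  have hx : (x, y) = ∑ i, x i • ((Pi.single i 1, 0) : (Fin m → ℝ) × (Fin n → ℝ))
      + ∑ j, y j • ((0, Pi.single j 1) : (Fin m → ℝ) × (Fin n → ℝ)) := by
    ext k <;> simp [Prod.fst_sum, Prod.snd_sum, Finset.sum_apply, Pi.single_apply]
  rw [hx]
  simp only [map_add, map_sum, map_smul, smul_eq_mul]

open Classical in
theorem hall_sufficiency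
    (m n : ℕ) (M : Fin m → Fin n → ℝ) (a : Fin m → ℝ) (p : Fin n → ℝ)
    (ha : ∀ i, 0 ≤ a i) (hp : ∀ j, 0 ≤ p j)
    (hsum : ∑ i, a i = ∑ j, p j)
    (hall : ∀ J : Finset (Fin n),
      ∑ j ∈ J, p j ≤ ∑ i ∈ Finset.univ.filter (fun i => ∃ j ∈ J, 0 < M i j), a i) :
    ∃ A : Fin m → Fin n → ℝ,
        (∀ i j, 0 ≤ A i j) ∧
        (∀ i, ∑ j, A i j = a i) ∧
        (∀ j, ∑ i, A i j = p j) ∧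
        (∀ i j, M i j = 0 → A i j = 0) := by
  rcases (Finset.sum_nonneg fun i _ => ha i : 0 ≤ ∑ i, a i).eq_or_lt with h0 | hpos
  · have ha0 := (Finset.sum_eq_zero_iff_of_nonneg fun i _ => ha i).1 h0.symm
    have hp0 := (Finset.sum_eq_zero_iff_of_nonneg fun i _ => hp i).1 (hsum ▸ h0.symm)
    refine ⟨fun _ _ => 0, by simp, fun i => ?_, fun j => ?_, by simp⟩
    · simp [ha0 i (Finset.mem_univ i)]
    · simp [hp0 j (Finset.mem_univ j)]
  set S := ∑ i, a i with hS
  by_contra hno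
  have hnot : (a, p) ∉ Set.image (marginals m n) (supportSimplex M S) := by
    rintro ⟨A, ⟨h1, h2, -⟩, h4⟩
    exact hno ⟨A, h1, fun i => congrFun (congrArg Prod.fst h4) i,
      fun j => congrFun (congrArg Prod.snd h4) j, h2⟩
  have hcont : Continuous (marginals m n) := LinearMap.continuous_of_finiteDimensional _
  obtain ⟨f, c, hf1, hf2⟩ := geometric_hahn_banach_closed_point
    ((supportSimplex_convex M S).linear_image (marginals m n))
    ((supportSimplex_compact M S).image hcont).isClosed hnot
  set u : Fin m → ℝ := fun i => f (Pi.single i 1, 0) with hu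
  set v : Fin n → ℝ := fun j => f (0, Pi.single j 1) with hv
  have hrepr : ∀ x y, f (x, y) = ∑ i, x i * u i + ∑ j, y j * v j := functional_repr f
  have hedge : ∀ i j, 0 < M i j → v j ≤ c / S - u i := by
    intro i j hij
    have := hf1 _ ⟨fun k l => if k = i ∧ l = j then S else 0, ⟨fun k l => ?_, fun k l h => ?_, ?_⟩,
      rfl⟩
    · have e : marginals m n (fun k l => if k = i ∧ l = j then S else 0)
          = (fun k => if k = i then S else 0, fun l => if l = j then S else 0) := by
        ext k <;> simp [marginals, ite_and]
      rw [e, hrepr] at this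
      simp only [ite_mul, zero_mul, Finset.sum_ite_eq', Finset.mem_univ, if_true] at this
      have h2 : u i + v j ≤ c / S := by
        rw [le_div_iff₀ hpos]
        linarith
      linarith
    · dsimp only
      split_ifs
      · exact hpos.le
      · exact le_rfl
    · have : ¬ (k = i ∧ l = j) := by
        rintro ⟨rfl, rfl⟩
        exact hij.ne' h
      simp [this]
    · simp [ite_and]
  have hlc := layer_cake a (fun i => c / S - u i) p v hsum ?_
  · rw [hrepr] at hf2
    have e : ∑ i, (c / S - u i) * a i = c - ∑ i, a i * u i := by
      simp only [sub_mul, Finset.sum_sub_distrib, ← Finset.mul_sum]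
      rw [← hS, div_mul_cancel₀ _ hpos.ne']
      simp only [mul_comm]
    have e2 : ∑ j, v j * p j = ∑ j, p j * v j := by simp only [mul_comm]
    linarith
  · intro t
    have h := hall (Finset.univ.filter fun j => t ≤ v j)
    simp only [Set.indicator_apply, Set.mem_ofPred_eq]
    rw [← Finset.sum_filter, ← Finset.sum_filter]
    refine h.trans (Finset.sum_le_sum_of_subset_of_nonneg ?_ fun i _ _ => ha i)
    intro i
    simp only [Finset.mem_filter, Finset.mem_univ, true_and]
    rintro ⟨j, hj, hij⟩
    exact hj.trans (hedge i j hij)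

open Classical in
/-- Feasibility of a rebalancing problem with the zero-pattern constraint
`A i j = 0` whenever `M i j = 0`: a dollar-allocation respecting the zero pattern
of `M` exists iff the two Hall-type conditions (1) and (2) hold. -/
theorem rebalancing_feasible_zero_pattern_iff
    (m n : ℕ) (M : Fin m → Fin n → ℝ) (a : Fin m → ℝ) (p : Fin n → ℝ)
    (hM : ∀ i j, 0 ≤ M i j) (hMcol : ∀ j, ∑ i, M i j = 1)
    (ha : ∀ i, 0 ≤ a i) (hp : ∀ j, 0 ≤ p j)
    (hsum : ∑ i, a i = ∑ j, p j) :
    (∃ A : Fin m → Fin n → ℝ,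
        (∀ i j, 0 ≤ A i j) ∧
        (∀ i, ∑ j, A i j = a i) ∧
        (∀ j, ∑ i, A i j = p j) ∧
        (∀ i j, M i j = 0 → A i j = 0)) ↔
      ((∀ J : Finset (Fin n),
          ∑ j ∈ J, p j ≤ ∑ i ∈ Finset.univ.filter (fun i => ∃ j ∈ J, 0 < M i j), a i) ∧
       (∀ I : Finset (Fin m),
          ∑ i ∈ I, a i ≤ ∑ j ∈ Finset.univ.filter (fun j => ∃ i ∈ I, 0 < M i j), p j)) := by
  constructor
  · rintro ⟨A, h1, h2, h3, h4⟩
    constructor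
    · intro J
      convert hall_necessity M A a p hM h1 h2 h3 h4 J
    · intro I
      have := hall_necessity (fun j i => M i j) (fun j i => A i j) p a (fun j i => hM i j)
        (fun j i => h1 i j) h3 h2 (fun j i => h4 i j) I
      convert this
  · rintro ⟨h, -⟩
    exact hall_sufficiency m n M a p ha hp hsum fun J => by convert h J
end

section
/- Let (M, a, p) be a rebalancing problem (so in particular ∑_{i=1}^m a_i = ∑_{j=1}^n p_j) and suppose x' ∈ ℝ^m and p' ∈ ℝ^n satisfy the asset-class equations x'_i · ∑_{j=1}^n M_{ij} p'_j = a_i for all i = 1, …, m and the portfolio equations p'_j · ∑_{i=1}^m M_{ij} x'_i = p_j for all j = 1, …, n−1. Then the remaining portfolio equation p'_n · ∑_{i=1}^m M_{in} x'_i = p_n also holds; that is, one of the m+n equations is redundant. -/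
/-- Redundancy of one equation: if `(x', p')` satisfies all of the asset-class
equations and all of the portfolio equations except the last one, then (using
`∑ a = ∑ p`) the last portfolio equation holds as well. -/
theorem portfolio_equation_redundant
    (m n : ℕ) (M : Fin m → Fin (n + 1) → ℝ) (a : Fin m → ℝ) (p : Fin (n + 1) → ℝ)
    (hM : ∀ i j, 0 ≤ M i j) (hMcol : ∀ j, ∑ i, M i j = 1)
    (ha : ∀ i, 0 ≤ a i) (hp : ∀ j, 0 ≤ p j)
    (hsum : ∑ i, a i = ∑ j, p j)
    (x' : Fin m → ℝ) (p' : Fin (n + 1) → ℝ)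
    (hasset : ∀ i, x' i * ∑ j, M i j * p' j = a i)
    (hport : ∀ j : Fin (n + 1), j ≠ Fin.last n → p' j * ∑ i, M i j * x' i = p j) :
    p' (Fin.last n) * ∑ i, M i (Fin.last n) * x' i = p (Fin.last n) := by
  have h1 : ∑ i, x' i * ∑ j, M i j * p' j = ∑ j, p' j * ∑ i, M i j * x' i := by
    simp only [Finset.mul_sum]
    rw [Finset.sum_comm]
    refine Finset.sum_congr rfl fun j _ => Finset.sum_congr rfl fun i _ => ?_
    ring
  rw [Finset.sum_congr rfl fun i _ => hasset i, hsum, Fin.sum_univ_castSucc,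
    Fin.sum_univ_castSucc (fun j => p' j * ∑ i, M i j * x' i),
    Finset.sum_congr rfl fun j _ => hport (Fin.castSucc j) (Fin.castSucc_lt_last j).ne] at h1
  linarith
end

section
/- Let M be a 2×2 real matrix with all entries positive, and let a₁, a₂, p₁, p₂ > 0 with a₁ + a₂ = p₁ + p₂. Set b = M₁₁M₂₂(a₁/p₁ − a₂/p₂) + M₂₁M₁₂(a₂/p₁ − a₁/p₂), c = M₁₂M₂₂(a₁ + a₂)/p₂, and d = M₁₁M₂₁(a₁ + a₂)/p₁. Then b² + 4cd > 0; the two roots K₊ = (−b + √(b² + 4cd))/(2d) and K₋ = (−b − √(b² + 4cd))/(2d) of the quadratic dK² + bK − c = 0 satisfy K₋ < 0 < K₊; and the 2×2 matrix A^$ defined by A^$_{i1} = a_i M_{i1} K₊ / (M_{i1}K₊ + M_{i2}) and A^$_{i2} = a_i M_{i2} / (M_{i1}K₊ + M_{i2}) has all entries positive, row sums A^$_{i1} + A^$_{i2} = a_i for i = 1, 2, and column sums A^$_{1j} + A^$_{2j} = p_j for j = 1, 2. Moreover, setting x'_i = a_i/(M_{i1}K₊ + M_{i2}) and p' = (K₊,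 1), the pair (x', p') satisfies the asset-class equations x'_i(M_{i1}p'_1 + M_{i2}p'_2) = a_i and the portfolio equations p'_j(M_{1j}x'_1 + M_{2j}x'_2) = p_j. -/
/-- Explicit analytic solution of the market-invariant rebalancing process in the
`2 × 2` case: the discriminant `b² + 4cd` is positive, the roots `K₊ > 0 > K₋` of
`dK² + bK − c = 0` are real, and the matrix built from `K₊` is positive with row sums
`a` and column sums `p`; the associated `(x', p')` solve the asset-class and portfolio
equations. -/
theorem market_invariant_two_by_two
    (M : Fin 2 → Fin 2 → ℝ) (hM : ∀ i j, 0 < M i j)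
    (a p : Fin 2 → ℝ) (ha : ∀ i, 0 < a i) (hp : ∀ j, 0 < p j)
    (hsum : a 0 + a 1 = p 0 + p 1)
    (b c d Kp Km : ℝ)
    (hb : b = M 0 0 * M 1 1 * (a 0 / p 0 - a 1 / p 1)
            + M 1 0 * M 0 1 * (a 1 / p 0 - a 0 / p 1))
    (hc : c = M 0 1 * M 1 1 * (a 0 + a 1) / p 1)
    (hd : d = M 0 0 * M 1 0 * (a 0 + a 1) / p 0)
    (hKp : Kp = (-b + Real.sqrt (b ^ 2 + 4 * c * d)) / (2 * d))
    (hKm : Km = (-b - Real.sqrt (b ^ 2 + 4 * c * d)) / (2 * d))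
    (A : Fin 2 → Fin 2 → ℝ)
    (hA0 : ∀ i, A i 0 = a i * M i 0 * Kp / (M i 0 * Kp + M i 1))
    (hA1 : ∀ i, A i 1 = a i * M i 1 / (M i 0 * Kp + M i 1))
    (x' : Fin 2 → ℝ) (hx' : ∀ i, x' i = a i / (M i 0 * Kp + M i 1))
    (p' : Fin 2 → ℝ) (hp'0 : p' 0 = Kp) (hp'1 : p' 1 = 1) :
    0 < b ^ 2 + 4 * c * d ∧
    (d * Kp ^ 2 + b * Kp - c = 0 ∧ d * Km ^ 2 + b * Km - c = 0) ∧
    (Km < 0 ∧ 0 < Kp) ∧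
    (∀ i j, 0 < A i j) ∧
    (∀ i, A i 0 + A i 1 = a i) ∧
    (∀ j, A 0 j + A 1 j = p j) ∧
    (∀ i, x' i * (M i 0 * p' 0 + M i 1 * p' 1) = a i) ∧
    (∀ j, p' j * (M 0 j * x' 0 + M 1 j * x' 1) = p j) := by
  have h00 := hM 0 0
  have h01 := hM 0 1
  have h10 := hM 1 0
  have h11 := hM 1 1
  have a0 := ha 0
  have a1 := ha 1
  have p0 := hp 0
  have p1 := hp 1
  have hcpos : 0 < c := by rw [hc]; positivity
  have hdpos : 0 < d := by rw [hd]; positivity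
  have hcd : 0 < 4 * c * d := by positivity
  have hD : 0 < b ^ 2 + 4 * c * d := by positivity
  have hs := Real.sq_sqrt hD.le
  have hs0 := Real.sqrt_nonneg (b ^ 2 + 4 * c * d)
  have hbs : |b| < Real.sqrt (b ^ 2 + 4 * c * d) := by
    apply Real.lt_sqrt_of_sq_lt
    rw [sq_abs]
    linarith
  obtain ⟨hb1, hb2⟩ := abs_lt.mp hbs
  generalize Real.sqrt (b ^ 2 + 4 * c * d) = s at *
  have hKppos : 0 < Kp := by
    rw [hKp]; apply div_pos <;> linarith
  have hKmneg : Km < 0 := by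
    rw [hKm]; apply div_neg_of_neg_of_pos <;> linarith
  have hQp : d * Kp ^ 2 + b * Kp - c = 0 := by
    rw [hKp]; field_simp; linear_combination hs
  have hQm : d * Km ^ 2 + b * Km - c = 0 := by
    rw [hKm]; field_simp; linear_combination hs
  have hden : ∀ i, 0 < M i 0 * Kp + M i 1 := fun i =>
    add_pos (mul_pos (hM i 0) hKppos) (hM i 1)
  have hrow : ∀ i, A i 0 + A i 1 = a i := by
    intro i
    have := (hden i).ne'
    rw [hA0, hA1]; field_simp
  have hratio : p 1 * (A 0 0 + A 1 0) = p 0 * (A 0 1 + A 1 1) := by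
    have e0 := (hden 0).ne'
    have e1 := (hden 1).ne'
    have hb' : b * (p 0 * p 1) = M 0 0 * M 1 1 * (a 0 * p 1 - a 1 * p 0)
            + M 1 0 * M 0 1 * (a 1 * p 1 - a 0 * p 0) := by
      rw [hb]; field_simp
    have hc' : c * (p 0 * p 1) = M 0 1 * M 1 1 * (a 0 + a 1) * p 0 := by
      rw [hc]; field_simp
    have hd' : d * (p 0 * p 1) = M 0 0 * M 1 0 * (a 0 + a 1) * p 1 := by
      rw [hd]; field_simp
    rw [hA0, hA0, hA1, hA1, div_add_div _ _ e0 e1, div_add_div _ _ e0 e1,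
      mul_div_assoc', mul_div_assoc']
    congr 1
    linear_combination (p 0 * p 1) * hQp - Kp ^ 2 * hd' - Kp * hb' + hc'
  have hr0 := hrow 0
  have hr1 := hrow 1
  have hcol0 : A 0 0 + A 1 0 = p 0 := by
    have : (p 0 + p 1) * (A 0 0 + A 1 0 - p 0) = 0 := by
      linear_combination hratio + p 0 * (hr0 + hr1 + hsum)
    rcases mul_eq_zero.mp this with h | h <;> linarith
  have hcol1 : A 0 1 + A 1 1 = p 1 := by linarith
  refine ⟨hD, ⟨hQp, hQm⟩, ⟨hKmneg, hKppos⟩, ?_, hrow, ?_, ?_, ?_⟩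
  · intro i j
    have e := hden i
    have m0 := hM i 0
    have m1 := hM i 1
    have ai := ha i
    fin_cases j
    · change 0 < A i 0
      rw [hA0]; positivity
    · change 0 < A i 1
      rw [hA1]; positivity
  · intro j
    fin_cases j
    · exact hcol0
    · exact hcol1
  · intro i
    rw [hx', hp'0, hp'1, mul_one, div_mul_cancel₀ _ (hden i).ne']
  · intro j
    fin_cases j
    · change p' 0 * (M 0 0 * x' 0 + M 1 0 * x' 1) = p 0
      rw [← hcol0, hA0, hA0, hx', hx', hp'0]; ring
    · change p' 1 * (M 0 1 * x' 0 + M 1 1 * x' 1) = p 1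
      rw [← hcol1, hA1, hA1, hx', hx', hp'1]; ring
end

section
/- Let M be a 2×3 real matrix with all entries positive, let a₁, a₂ > 0 and p₁, p₂, p₃ > 0 with a₁ + a₂ = p₁ + p₂ + p₃. Define B₁ = M₁₁M₁₂M₁₃ a₂, B₂ = M₁₁M₁₂M₂₃(p₁ + p₂ − a₁) + M₁₁M₂₂M₁₃(p₁ + p₃ − a₁) + M₂₁M₁₂M₁₃(p₂ + p₃ − a₁), B₃ = M₁₁M₂₂M₂₃(p₁ − a₁) + M₂₁M₁₂M₂₃(p₂ − a₁) + M₂₁M₂₂M₁₃(p₃ − a₁), and B₄ = −a₁M₂₁M₂₂M₂₃. Then B₁ > 0, B₄ < 0, and for every real x > 0 the equation x·M₁₁p₁/(M₁₁x + M₂₁) + x·M₁₂p₂/(M₁₂x + M₂₂) + x·M₁₃p₃/(M₁₃x + M₂₃) = a₁ holds if and only if B₁x³ + B₂x² + B₃x + B₄ = 0. (Here x plays the role of x'₁ with x'₂ = 1 and p'_j = p_j/(M_{1j}x + M_{2j}), so positive solutions of the market-invariant equations for a 2×3 target correspond exactly to positive roots of this cubic.) -/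
/-- The `2 × 3` case of the market-invariant rebalancing process: with `x'₂ = 1` and
`p'_j = p_j / (M_{1j} x + M_{2j})` eliminated, a positive `x` solves the remaining
asset-class equation iff it is a root of the cubic `B₁x³ + B₂x² + B₃x + B₄ = 0`;
moreover `B₁ > 0` and `B₄ < 0`. -/
theorem market_invariant_two_by_three_cubic
    (M : Fin 2 → Fin 3 → ℝ) (hM : ∀ i j, 0 < M i j)
    (a : Fin 2 → ℝ) (p : Fin 3 → ℝ) (ha : ∀ i, 0 < a i) (hp : ∀ j, 0 < p j)
    (hsum : a 0 + a 1 = p 0 + p 1 + p 2)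
    (B₁ B₂ B₃ B₄ : ℝ)
    (hB₁ : B₁ = M 0 0 * M 0 1 * M 0 2 * a 1)
    (hB₂ : B₂ = M 0 0 * M 0 1 * M 1 2 * (p 0 + p 1 - a 0)
              + M 0 0 * M 1 1 * M 0 2 * (p 0 + p 2 - a 0)
              + M 1 0 * M 0 1 * M 0 2 * (p 1 + p 2 - a 0))
    (hB₃ : B₃ = M 0 0 * M 1 1 * M 1 2 * (p 0 - a 0)
              + M 1 0 * M 0 1 * M 1 2 * (p 1 - a 0)
              + M 1 0 * M 1 1 * M 0 2 * (p 2 - a 0))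
    (hB₄ : B₄ = -(a 0 * (M 1 0 * M 1 1 * M 1 2))) :
    0 < B₁ ∧ B₄ < 0 ∧
    ∀ x : ℝ, 0 < x →
      (x * M 0 0 * p 0 / (M 0 0 * x + M 1 0)
        + x * M 0 1 * p 1 / (M 0 1 * x + M 1 1)
        + x * M 0 2 * p 2 / (M 0 2 * x + M 1 2) = a 0 ↔
       B₁ * x ^ 3 + B₂ * x ^ 2 + B₃ * x + B₄ = 0) := by
  have h00 := hM 0 0
  have h01 := hM 0 1
  have h02 := hM 0 2
  have h10 := hM 1 0
  have h11 := hM 1 1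
  have h12 := hM 1 2
  have a0 := ha 0
  have a1 := ha 1
  refine ⟨by rw [hB₁]; positivity, by rw [hB₄]; exact neg_neg_of_pos (by positivity), ?_⟩
  intro x hx
  have d0 : M 0 0 * x + M 1 0 ≠ 0 := by positivity
  have d1 : M 0 1 * x + M 1 1 ≠ 0 := by positivity
  have d2 : M 0 2 * x + M 1 2 ≠ 0 := by positivity
  have e : a 1 = p 0 + p 1 + p 2 - a 0 := by linarith
  rw [div_add_div _ _ d0 d1, div_add_div _ _ (mul_ne_zero d0 d1) d2,
    div_eq_iff (mul_ne_zero (mul_ne_zero d0 d1) d2), hB₁, hB₂, hB₃, hB₄, e]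
  constructor <;> intro h <;> linear_combination h
end

section
/- Let B be an m×n real matrix with all entries positive, let a ∈ ℝ^m and p ∈ ℝ^n have all entries positive with ∑_{i=1}^m a_i = ∑_{j=1}^n p_j, and suppose ∑_{i=1}^m B_{ij} = p_j for every j. Define the row-scaled matrix B^a_{ij} = B_{ij} · a_i / (∑_{t=1}^n B_{it}), and then the column-scaled matrix B'_{ij} = B^a_{ij} · p_j / (∑_{s=1}^m B^a_{sj}). Then ∑_{i=1}^m B'_{ij} = p_j for every j, and the extreme row-sum ratios improve monotonically: min_i (∑_{j=1}^n B'_{ij}) / a_i ≥ min_i (∑_{j=1}^n B_{ij}) / a_i and max_i (∑_{j=1}^n B'_{ij}) / a_i ≤ max_i (∑_{j=1}^n B_{ij}) / a_i. -/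
/-- One double step of the RAS (market-invariant) iteration: rescale rows to sums `a`,
then columns to sums `p`. The resulting matrix `B'` again has column sums `p`, and the
extreme row-sum ratios improve monotonically: the minimum of `(∑_j B'_{ij})/a_i` does
not decrease and the maximum does not increase. -/
theorem ras_double_step_monotone
    (m n : ℕ) (B : Fin (m + 1) → Fin (n + 1) → ℝ) (hB : ∀ i j, 0 < B i j)
    (a : Fin (m + 1) → ℝ) (p : Fin (n + 1) → ℝ)
    (ha : ∀ i, 0 < a i) (hp : ∀ j, 0 < p j)
    (hsum : ∑ i, a i = ∑ j, p j)
    (hBcol : ∀ j, ∑ i, B i j = p j)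
    (Ba B' : Fin (m + 1) → Fin (n + 1) → ℝ)
    (hBa : ∀ i j, Ba i j = B i j * a i / ∑ t, B i t)
    (hB' : ∀ i j, B' i j = Ba i j * p j / ∑ s, Ba s j) :
    (∀ j, ∑ i, B' i j = p j) ∧
    Finset.univ.inf' Finset.univ_nonempty (fun i => (∑ j, B i j) / a i) ≤
      Finset.univ.inf' Finset.univ_nonempty (fun i => (∑ j, B' i j) / a i) ∧
    Finset.univ.sup' Finset.univ_nonempty (fun i => (∑ j, B' i j) / a i) ≤
      Finset.univ.sup' Finset.univ_nonempty (fun i => (∑ j, B i j) / a i) := by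
  have hR : ∀ i, 0 < ∑ t, B i t := fun i =>
    Finset.sum_pos (fun j _ => hB i j) Finset.univ_nonempty
  have hBapos : ∀ i j, 0 < Ba i j := fun i j => by
    rw [hBa]; exact div_pos (mul_pos (hB i j) (ha i)) (hR i)
  have hc : ∀ j, 0 < ∑ s, Ba s j := fun j =>
    Finset.sum_pos (fun i _ => hBapos i j) Finset.univ_nonempty
  have hBarow : ∀ i, ∑ j, Ba i j = a i := fun i => by
    simp only [hBa]
    rw [← Finset.sum_div, ← Finset.sum_mul, mul_comm, mul_div_assoc,
      div_self (hR i).ne', mul_one]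
  refine ⟨fun j => ?_, ?_, ?_⟩
  · simp only [hB']
    rw [← Finset.sum_div, ← Finset.sum_mul, mul_comm, mul_div_assoc,
      div_self (hc j).ne', mul_one]
  · set μ := Finset.univ.inf' Finset.univ_nonempty (fun i => (∑ j, B i j) / a i) with hμ
    have h1 : ∀ i, μ * a i ≤ ∑ j, B i j := fun i =>
      (le_div_iff₀ (ha i)).1 (Finset.inf'_le (fun i => (∑ j, B i j) / a i) (Finset.mem_univ i))
    have h2 : ∀ i j, μ * Ba i j ≤ B i j := fun i j => by
      rw [hBa, ← mul_div_assoc, div_le_iff₀ (hR i)]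
      have := mul_le_mul_of_nonneg_left (h1 i) (hB i j).le
      linarith
    have h3 : ∀ j, μ * ∑ s, Ba s j ≤ p j := fun j => by
      rw [Finset.mul_sum, ← hBcol]
      exact Finset.sum_le_sum fun i _ => h2 i j
    have h4 : ∀ i j, μ * Ba i j ≤ B' i j := fun i j => by
      rw [hB', le_div_iff₀ (hc j)]
      have := mul_le_mul_of_nonneg_left (h3 j) (hBapos i j).le
      linarith
    refine Finset.le_inf' _ _ fun i _ => ?_
    rw [le_div_iff₀ (ha i), ← hBarow i, Finset.mul_sum]
    exact Finset.sum_le_sum fun j _ => h4 i j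
  · set μ := Finset.univ.sup' Finset.univ_nonempty (fun i => (∑ j, B i j) / a i) with hμ
    have h1 : ∀ i, ∑ j, B i j ≤ μ * a i := fun i =>
      (div_le_iff₀ (ha i)).1 (Finset.le_sup' (fun i => (∑ j, B i j) / a i) (Finset.mem_univ i))
    have h2 : ∀ i j, B i j ≤ μ * Ba i j := fun i j => by
      rw [hBa, ← mul_div_assoc, le_div_iff₀ (hR i)]
      have := mul_le_mul_of_nonneg_left (h1 i) (hB i j).le
      linarith
    have h3 : ∀ j, p j ≤ μ * ∑ s, Ba s j := fun j => by
      rw [Finset.mul_sum, ← hBcol]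
      exact Finset.sum_le_sum fun i _ => h2 i j
    have h4 : ∀ i j, B' i j ≤ μ * Ba i j := fun i j => by
      rw [hB', div_le_iff₀ (hc j)]
      have := mul_le_mul_of_nonneg_left (h3 j) (hBapos i j).le
      linarith
    refine Finset.sup'_le _ _ fun i _ => ?_
    rw [div_le_iff₀ (ha i), ← hBarow i, Finset.mul_sum]
    exact Finset.sum_le_sum fun j _ => h4 i j
end

section
/- Let M be an m×n real matrix with all entries positive and let a ∈ ℝ^m, p ∈ ℝ^n have all entries positive with ∑_{i=1}^m a_i = ∑_{j=1}^n p_j. Then the two sequences of matrices M^{(k,p)} and M^{(k,a)} produced by the market-invariant (RAS) iteration both converge entrywise as k → ∞, and they converge to a common limit A^$. The limit A^$ has all entries positive, satisfies ∑_{j=1}^n A^$_{ij} = a_i for every i and ∑_{i=1}^m A^$_{ij} = p_j for every j, and there exist vectors x' ∈ ℝ^m and p' ∈ ℝ^n with all entries positive such that A^$_{ij} = x'_i M_{ij} p'_j for all i, j. -/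
lemma ras_exists_lower {α : Type*} [Finite α] (f : α → ℝ) (hf : ∀ x, 0 < f x) :
    ∃ ε : ℝ, 0 < ε ∧ ∀ x, ε ≤ f x := by
  cases isEmpty_or_nonempty α with
  | inl h => exact ⟨1, one_pos, fun x => (h.false x).elim⟩
  | inr h =>
    obtain ⟨x, hx⟩ := Finite.exists_min f
    exact ⟨f x, hf x, hx⟩

lemma ras_exists_upper {α : Type*} [Finite α] (f : α → ℝ) :
    ∃ u : ℝ, 0 < u ∧ ∀ x, f x ≤ u := by
  cases isEmpty_or_nonempty α with
  | inl h => exact ⟨1, one_pos, fun x => (h.false x).elim⟩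
  | inr h =>
    obtain ⟨x, hx⟩ := Finite.exists_max f
    exact ⟨max (f x) 1, by positivity, fun y => (hx y).trans (le_max_left _ _)⟩

/-- Core convergence, in terms of the scaling factors `h` (rows) and `c` (columns). -/
lemma ras_core {m n : ℕ} [Nonempty (Fin m)] [Nonempty (Fin n)]
    (M : Fin m → Fin n → ℝ) (hM : ∀ i j, 0 < M i j)
    (a : Fin m → ℝ) (p : Fin n → ℝ) (ha : ∀ i, 0 < a i) (hp : ∀ j, 0 < p j)
    (hsum : ∑ i, a i = ∑ j, p j)
    (B : ℕ → Fin m → Fin n → ℝ) (h : ℕ → Fin m → ℝ) (c : ℕ → Fin n → ℝ)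
    (hB : ∀ k i j, 0 < B k i j)
    (hcol : ∀ k j, ∑ i, B k i j = p j)
    (hh : ∀ k i, 0 < h k i) (hc : ∀ k j, 0 < c k j)
    (hrow : ∀ k i, ∑ j, B k i j * h k i = a i)
    (hcc : ∀ k j, ∑ i, B k i j * h k i = p j * c k j)
    (hstep : ∀ k i j, B (k + 1) i j = B k i j * h k i / c k j)
    (hcross : ∀ k i j s t, B k i j * B k s t * (M i t * M s j)
      = B k i t * B k s j * (M i j * M s t)) :
    ∃ A : Fin m → Fin n → ℝ,
      (∀ i j, Filter.Tendsto (fun k => B k i j) Filter.atTop (nhds (A i j))) ∧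
      (∀ i, Filter.Tendsto (fun k => h k i) Filter.atTop (nhds 1)) ∧
      (∀ i j, 0 < A i j) := by
  -- elementary averaging facts
  have clow : ∀ k l, (∀ i, l ≤ h k i) → ∀ j, l ≤ c k j := by
    intro k l hl j
    have h1 : p j * l ≤ p j * c k j := by
      rw [← hcc, ← hcol k j, Finset.sum_mul]
      exact Finset.sum_le_sum fun i _ => mul_le_mul_of_nonneg_left (hl i) (hB k i j).le
    exact le_of_mul_le_mul_left h1 (hp j)
  have cup : ∀ k u, (∀ i, h k i ≤ u) → ∀ j, c k j ≤ u := by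
    intro k u hu j
    have h1 : p j * c k j ≤ p j * u := by
      rw [← hcc, ← hcol k j, Finset.sum_mul]
      exact Finset.sum_le_sum fun i _ => mul_le_mul_of_nonneg_left (hu i) (hB k i j).le
    exact le_of_mul_le_mul_left h1 (hp j)
  have hnext : ∀ k i, ∑ j, (B k i j * h k i) * (h (k+1) i / c k j) = a i := by
    intro k i
    rw [← hrow (k+1) i]
    refine Finset.sum_congr rfl fun j _ => ?_
    rw [hstep]; ring
  have hlow : ∀ k l, (∀ j, l ≤ c k j) → ∀ i, l ≤ h (k+1) i := by
    intro k l hl i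
    by_contra hcon
    push Not at hcon
    have h1 := hnext k i
    have h2 : ∑ j, (B k i j * h k i) * (h (k+1) i / c k j) < ∑ j, B k i j * h k i := by
      refine Finset.sum_lt_sum_of_nonempty Finset.univ_nonempty fun j _ => ?_
      have : h (k+1) i / c k j < 1 := by
        rw [div_lt_one (hc k j)]; exact hcon.trans_le (hl j)
      have h3 := mul_pos (hB k i j) (hh k i)
      nlinarith
    rw [h1, hrow] at h2
    exact lt_irrefl _ h2
  have hup : ∀ k u, (∀ j, c k j ≤ u) → ∀ i, h (k+1) i ≤ u := by
    intro k l hl i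
    by_contra hcon
    push Not at hcon
    have h1 := hnext k i
    have h2 : ∑ j, B k i j * h k i < ∑ j, (B k i j * h k i) * (h (k+1) i / c k j) := by
      refine Finset.sum_lt_sum_of_nonempty Finset.univ_nonempty fun j _ => ?_
      have : 1 < h (k+1) i / c k j := by
        rw [one_lt_div (hc k j)]; exact (hl j).trans_lt hcon
      have h3 := mul_pos (hB k i j) (hh k i)
      nlinarith
    rw [h1, hrow] at h2
    exact lt_irrefl _ h2
  -- uniform bounds
  obtain ⟨l0, hl0, hl0'⟩ := ras_exists_lower (h 0) (hh 0)
  obtain ⟨u0, hu0, hu0'⟩ := ras_exists_upper (h 0)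
  have hlb : ∀ k i, l0 ≤ h k i := by
    intro k
    induction k with
    | zero => exact hl0'
    | succ k ih => exact hlow k l0 (clow k l0 ih)
  have hub : ∀ k i, h k i ≤ u0 := by
    intro k
    induction k with
    | zero => exact hu0'
    | succ k ih => exact hup k u0 (cup k u0 ih)
  obtain ⟨κ, hκ, hκ'⟩ := ras_exists_lower
    (fun x : (Fin m × Fin n) × (Fin m × Fin n) =>
      M x.1.1 x.1.2 * M x.2.1 x.2.2 / (M x.1.1 x.2.2 * M x.2.1 x.1.2))
    (fun x => div_pos (mul_pos (hM _ _) (hM _ _)) (mul_pos (hM _ _) (hM _ _)))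
  obtain ⟨α, hα, hα'⟩ := ras_exists_lower a ha
  have hS : 0 < ∑ j, p j := Finset.sum_pos (fun j _ => hp j) Finset.univ_nonempty
  have hBlow : ∀ k i j, κ * (α / u0) / (∑ j, p j) * p j ≤ B k i j := by
    intro k i j
    have hc1 : ∀ s t, κ * (B k i t * B k s j) ≤ B k i j * B k s t := by
      intro s t
      have h1 := hκ' ((i, j), (s, t))
      simp only at h1
      have hd : 0 < M i t * M s j := mul_pos (hM _ _) (hM _ _)
      rw [le_div_iff₀ hd] at h1
      have h2 := hcross k i j s t
      have h3 : 0 < B k i t * B k s j := mul_pos (hB _ _ _) (hB _ _ _)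
      refine le_of_mul_le_mul_right ?_ hd
      rw [h2]
      nlinarith
    have hc2 : κ * ((∑ t, B k i t) * (∑ s, B k s j)) ≤ B k i j * (∑ t, ∑ s, B k s t) := by
      rw [Finset.sum_mul_sum, Finset.mul_sum, Finset.mul_sum]
      refine Finset.sum_le_sum fun t _ => ?_
      rw [Finset.mul_sum, Finset.mul_sum]
      exact Finset.sum_le_sum fun s _ => hc1 s t
    simp only [hcol] at hc2
    have hr : α / u0 ≤ ∑ t, B k i t := by
      rw [div_le_iff₀ hu0]
      calc α ≤ a i := hα' i
        _ = (∑ t, B k i t) * h k i := by rw [← hrow k i, Finset.sum_mul]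
        _ ≤ _ := mul_le_mul_of_nonneg_left (hub k i) (Finset.sum_nonneg fun t _ => (hB k i t).le)
    rw [div_mul_eq_mul_div, div_le_iff₀ hS]
    refine le_trans ?_ hc2
    rw [mul_assoc]
    exact mul_le_mul_of_nonneg_left (mul_le_mul_of_nonneg_right hr (hp j).le) hκ.le
  obtain ⟨δ, hδ, hδ1, hδB⟩ : ∃ δ : ℝ, 0 < δ ∧ δ < 1 ∧ ∀ k i j, δ * p j ≤ B k i j := by
    refine ⟨min (κ * (α / u0) / (∑ j, p j)) (1/2), by positivity,
      (min_le_right _ _).trans_lt (by norm_num), fun k i j => le_trans ?_ (hBlow k i j)⟩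
    exact mul_le_mul_of_nonneg_right (min_le_left _ _) (hp j).le
  -- contraction
  have hosc : ∀ k, ∃ l u s, h k s = l ∧ (∀ i, l ≤ h k i) ∧ (∀ i, h k i ≤ u) ∧
      u - l ≤ u0 * (1 - δ) ^ k := by
    intro k
    induction k with
    | zero =>
      obtain ⟨s, hs⟩ := Finite.exists_min (h 0)
      refine ⟨h 0 s, u0, s, rfl, hs, hub 0, ?_⟩
      have := hh 0 s
      simp; exact this.le
    | succ k ih =>
      obtain ⟨l, u, s, hs, hl, hu, hlu⟩ := ih
      obtain ⟨s', hs'⟩ := Finite.exists_min (h (k+1))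
      have hul : l ≤ u := (hl s).trans (hu s)
      have hcu : ∀ j, c k j ≤ u - δ * (u - l) := by
        intro j
        have h1 : B k s j * (u - h k s) ≤ ∑ i, B k i j * (u - h k i) :=
          Finset.single_le_sum (f := fun i => B k i j * (u - h k i))
            (fun i _ => mul_nonneg (hB k i j).le (sub_nonneg.2 (hu i))) (Finset.mem_univ s)
        have h2 : ∑ i, B k i j * (u - h k i) = p j * u - p j * c k j := by
          simp only [mul_sub, Finset.sum_sub_distrib]
          rw [hcc, ← Finset.sum_mul, hcol]
        have h3 : δ * p j * (u - l) ≤ B k s j * (u - l) :=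
          mul_le_mul_of_nonneg_right (hδB k s j) (sub_nonneg.2 hul)
        rw [hs, h2] at h1
        refine le_of_mul_le_mul_left ?_ (hp j)
        nlinarith
      refine ⟨h (k+1) s', u - δ * (u - l), s', rfl, hs', hup k _ hcu, ?_⟩
      have h4 := hlow k l (clow k l hl) s'
      have h5 := mul_le_mul_of_nonneg_right hlu (sub_nonneg.2 hδ1.le)
      rw [pow_succ]
      nlinarith
  have hBp : ∀ k i j, B k i j ≤ p j := by
    intro k i j
    rw [← hcol k j]
    exact Finset.single_le_sum (f := fun i => B k i j) (fun i _ => (hB k i j).le)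
      (Finset.mem_univ i)
  have hcauchy : ∀ i j, CauchySeq (fun k => B k i j) := by
    intro i j
    refine cauchySeq_of_le_geometric (1 - δ) (p j * u0 / l0) (by linarith) fun k => ?_
    obtain ⟨l, u, s, hs, hl, hu, hlu⟩ := hosc k
    rw [Real.dist_eq, hstep]
    have e : B k i j - B k i j * h k i / c k j = B k i j * ((c k j - h k i) / c k j) := by
      have := (hc k j).ne'
      field_simp
    rw [e, abs_mul, abs_div, abs_of_pos (hB k i j), abs_of_pos (hc k j)]
    have h1 : |c k j - h k i| ≤ u0 * (1 - δ) ^ k := by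
      rw [abs_le]
      have h1 := clow k l hl j
      have h2 := cup k u hu j
      have h3 := hl i
      have h4 := hu i
      constructor <;> linarith
    have h2 : |c k j - h k i| / c k j ≤ (u0 * (1 - δ) ^ k) / l0 :=
      div_le_div₀ ((abs_nonneg _).trans h1) h1 hl0 (clow k l0 (hlb k) j)
    calc _ ≤ p j * ((u0 * (1 - δ) ^ k) / l0) :=
          mul_le_mul (hBp k i j) h2 (div_nonneg (abs_nonneg _) (hc k j).le) (hp j).le
      _ = _ := by ring
  choose A hA using fun i j => cauchySeq_tendsto_of_complete (hcauchy i j)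
  refine ⟨A, hA, ?_, ?_⟩
  · intro i
    have hbound : ∀ k, |h k i - 1| ≤ u0 * (1 - δ) ^ k := by
      intro k
      obtain ⟨l, u, s, hs, hl, hu, hlu⟩ := hosc k
      have hrs : ∑ i, ∑ j, B k i j = ∑ i, ∑ j, B k i j * h k i := by
        rw [Finset.sum_comm]
        simp only [hcol, hrow, hsum]
      have hl1 : l ≤ 1 := by
        by_contra hcon
        push Not at hcon
        refine absurd hrs (ne_of_lt ?_)
        refine Finset.sum_lt_sum_of_nonempty Finset.univ_nonempty fun i _ =>
          Finset.sum_lt_sum_of_nonempty Finset.univ_nonempty fun j _ => ?_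
        have := hB k i j
        have := hl i
        nlinarith
      have hu1 : 1 ≤ u := by
        by_contra hcon
        push Not at hcon
        refine absurd hrs (ne_of_gt ?_)
        refine Finset.sum_lt_sum_of_nonempty Finset.univ_nonempty fun i _ =>
          Finset.sum_lt_sum_of_nonempty Finset.univ_nonempty fun j _ => ?_
        have := hB k i j
        have := hu i
        nlinarith
      have h3 := hl i
      have h4 := hu i
      rw [abs_le]
      constructor <;> linarith
    rw [tendsto_iff_dist_tendsto_zero]
    have h0 : Filter.Tendsto (fun k : ℕ => u0 * (1 - δ) ^ k) Filter.atTop (nhds 0) := by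
      simpa using (tendsto_pow_atTop_nhds_zero_of_lt_one (sub_nonneg.2 hδ1.le)
        (by linarith : 1 - δ < 1)).const_mul u0
    exact squeeze_zero (fun k => dist_nonneg) (fun k => by rw [Real.dist_eq]; exact hbound k) h0
  · intro i j
    exact (mul_pos hδ (hp j)).trans_le
      (ge_of_tendsto (hA i j) (Filter.Eventually.of_forall fun k => hδB k i j))

/-- Convergence of the market-invariant (RAS) iteration: when `M` is entrywise
positive and the positive marginals `a`, `p` have equal total sums, both iterate
sequences converge entrywise to a common limit `A$`, which is entrywise positive,
has row sums `a` and column sums `p`, and is biproportional to `M` with positive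
scaling vectors. -/
theorem ras_iteration_converges
    (m n : ℕ) (M : Fin m → Fin n → ℝ) (hM : ∀ i j, 0 < M i j)
    (a : Fin m → ℝ) (p : Fin n → ℝ) (ha : ∀ i, 0 < a i) (hp : ∀ j, 0 < p j)
    (hsum : ∑ i, a i = ∑ j, p j)
    (Mp Ma : ℕ → Fin m → Fin n → ℝ)
    (hMp1 : ∀ i j, Mp 1 i j = M i j * p j)
    (hMa : ∀ k, 1 ≤ k → ∀ i j, Ma k i j = Mp k i j * a i / ∑ t, Mp k i t)
    (hMp : ∀ k, 1 ≤ k → ∀ i j, Mp (k + 1) i j = Ma k i j * p j / ∑ s, Ma k s j) :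
    ∃ A : Fin m → Fin n → ℝ,
      (∀ i j, Filter.Tendsto (fun k => Mp k i j) Filter.atTop (nhds (A i j))) ∧
      (∀ i j, Filter.Tendsto (fun k => Ma k i j) Filter.atTop (nhds (A i j))) ∧
      (∀ i j, 0 < A i j) ∧
      (∀ i, ∑ j, A i j = a i) ∧
      (∀ j, ∑ i, A i j = p j) ∧
      (∃ x' : Fin m → ℝ, ∃ p' : Fin n → ℝ,
        (∀ i, 0 < x' i) ∧ (∀ j, 0 < p' j) ∧ ∀ i j, A i j = x' i * M i j * p' j) := by
  rcases Nat.eq_zero_or_pos m with hm0 | hm0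
  · subst hm0
    have hn0 : IsEmpty (Fin n) := by
      by_contra hne
      rw [not_isEmpty_iff] at hne
      have := Finset.sum_pos (fun j _ => hp j) (Finset.univ_nonempty (α := Fin n))
      simp at hsum
      linarith
    exact ⟨fun _ _ => 0, fun i => i.elim0, fun i => i.elim0, fun i => i.elim0, fun i => i.elim0,
      fun j => (hn0.false j).elim, fun _ => 1, fun _ => 1, fun i => i.elim0,
      fun j => (hn0.false j).elim, fun i => i.elim0⟩
  have hmn : Nonempty (Fin m) := ⟨⟨0, hm0⟩⟩
  have hnn : Nonempty (Fin n) := by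
    by_contra hne
    rw [not_nonempty_iff] at hne
    have := Finset.sum_pos (fun i _ => ha i) (Finset.univ_nonempty (α := Fin m))
    simp at hsum
    linarith
  have hform : ∀ k, ∃ x : Fin m → ℝ, ∃ y : Fin n → ℝ, (∀ i, 0 < x i) ∧ (∀ j, 0 < y j) ∧
      ∀ i j, Mp (k + 1) i j = x i * M i j * y j := by
    intro k
    induction k with
    | zero => exact ⟨fun _ => 1, p, fun _ => one_pos, hp, fun i j => by simp [hMp1]⟩
    | succ k ih =>
      obtain ⟨x, y, hx, hy, hxy⟩ := ih
      have hP : ∀ i j, 0 < Mp (k+1) i j := fun i j => by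
        rw [hxy]; exact mul_pos (mul_pos (hx i) (hM i j)) (hy j)
      have hR : ∀ i, 0 < ∑ t, Mp (k+1) i t := fun i =>
        Finset.sum_pos (fun t _ => hP i t) Finset.univ_nonempty
      have hQ : ∀ i j, 0 < Ma (k+1) i j := fun i j => by
        rw [hMa (k+1) (by omega)]; exact div_pos (mul_pos (hP i j) (ha i)) (hR i)
      have hC : ∀ j, 0 < ∑ s, Ma (k+1) s j := fun j =>
        Finset.sum_pos (fun s _ => hQ s j) Finset.univ_nonempty
      refine ⟨fun i => x i * (a i / ∑ t, Mp (k+1) i t), fun j => y j * (p j / ∑ s, Ma (k+1) s j),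
        fun i => mul_pos (hx i) (div_pos (ha i) (hR i)),
        fun j => mul_pos (hy j) (div_pos (hp j) (hC j)), fun i j => ?_⟩
      rw [hMp (k+1) (by omega), hMa (k+1) (by omega) i j, hxy i j]
      ring
  have hP : ∀ k i j, 0 < Mp (k+1) i j := fun k i j => by
    obtain ⟨x, y, hx, hy, hxy⟩ := hform k
    rw [hxy]; exact mul_pos (mul_pos (hx i) (hM i j)) (hy j)
  have hR : ∀ k i, 0 < ∑ t, Mp (k+1) i t := fun k i =>
    Finset.sum_pos (fun t _ => hP k i t) Finset.univ_nonempty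
  have hQ : ∀ k i j, 0 < Ma (k+1) i j := fun k i j => by
    rw [hMa (k+1) (by omega)]; exact div_pos (mul_pos (hP k i j) (ha i)) (hR k i)
  have hC : ∀ k j, 0 < ∑ s, Ma (k+1) s j := fun k j =>
    Finset.sum_pos (fun s _ => hQ k s j) Finset.univ_nonempty
  have hcol : ∀ k j, ∑ i, Mp (k+2) i j = p j := by
    intro k j
    have : ∀ i, Mp (k+2) i j = Ma (k+1) i j * p j / ∑ s, Ma (k+1) s j :=
      fun i => hMp (k+1) (by omega) i j
    simp only [this]
    rw [← Finset.sum_div, ← Finset.sum_mul, mul_div_assoc, mul_div_cancel₀]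
    exact (hC k j).ne'
  have hMa' : ∀ k i j, Ma (k+1) i j = Mp (k+1) i j * (a i / ∑ t, Mp (k+1) i t) := by
    intro k i j
    rw [hMa (k+1) (by omega), mul_div_assoc]
  have hrow : ∀ k i, ∑ j, Ma (k+1) i j = a i := by
    intro k i
    simp only [hMa']
    rw [← Finset.sum_mul, mul_div_cancel₀]
    exact (hR k i).ne'
  have hcross : ∀ k i j s t, Mp (k+2) i j * Mp (k+2) s t * (M i t * M s j)
      = Mp (k+2) i t * Mp (k+2) s j * (M i j * M s t) := by
    intro k i j s t
    obtain ⟨x, y, hx, hy, hxy⟩ := hform (k+1)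
    simp only [show k + 2 = k + 1 + 1 from rfl, hxy]
    ring
  obtain ⟨A, hA, hh, hA0⟩ := ras_core M hM a p ha hp hsum (fun k => Mp (k+2))
    (fun k i => a i / ∑ t, Mp (k+2) i t) (fun k j => (∑ s, Ma (k+2) s j) / p j)
    (fun k => hP (k+1)) hcol (fun k i => div_pos (ha i) (hR (k+1) i))
    (fun k j => div_pos (hC (k+1) j) (hp j))
    (fun k i => by
      refine Eq.trans ?_ (hrow (k+1) i)
      exact Finset.sum_congr rfl fun j _ => (hMa' (k+1) i j).symm)
    (fun k j => by
      rw [mul_div_cancel₀ _ (hp j).ne']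
      exact Finset.sum_congr rfl fun i _ => (hMa' (k+1) i j).symm)
    (fun k i j => by
      have h1 := hMp (k+2) (by omega) i j
      have h2 := hMa' (k+1) i j
      simp only [show k + 1 + 2 = k + 2 + 1 from rfl]
      rw [h1, div_div_eq_mul_div, ← h2])
    hcross
  have hAa : ∀ i j, Filter.Tendsto (fun k => Ma (k+2) i j) Filter.atTop (nhds (A i j)) := by
    intro i j
    have := (hA i j).mul (hh i)
    rw [mul_one] at this
    exact this.congr fun k => (hMa' (k+1) i j).symm
  refine ⟨A, fun i j => (Filter.tendsto_add_atTop_iff_nat 2).1 (hA i j),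
    fun i j => (Filter.tendsto_add_atTop_iff_nat 2).1 (hAa i j), hA0, ?_, ?_, ?_⟩
  · intro i
    have h1 := tendsto_finsetSum Finset.univ fun j _ => hAa i j
    exact tendsto_nhds_unique h1 (tendsto_const_nhds.congr fun k => (hrow (k+1) i).symm)
  · intro j
    have h1 := tendsto_finsetSum Finset.univ fun i _ => hA i j
    exact tendsto_nhds_unique h1 (tendsto_const_nhds.congr fun k => (hcol k j).symm)
  · have hAc : ∀ i j s t, A i j * A s t * (M i t * M s j) = A i t * A s j * (M i j * M s t) := by
      intro i j s t
      have h1 := ((hA i j).mul (hA s t)).mul_const (M i t * M s j)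
      have h2 := ((hA i t).mul (hA s j)).mul_const (M i j * M s t)
      exact tendsto_nhds_unique h1 (h2.congr fun k => (hcross k i j s t).symm)
    obtain ⟨s⟩ := hmn
    obtain ⟨t⟩ := hnn
    refine ⟨fun i => A i t / M i t, fun j => A s j / M s j * (M s t / A s t),
      fun i => div_pos (hA0 _ _) (hM _ _),
      fun j => mul_pos (div_pos (hA0 _ _) (hM _ _)) (div_pos (hM _ _) (hA0 _ _)), fun i j => ?_⟩
    have h1 := hAc i j s t
    have e1 := (hM i t).ne'
    have e2 := (hM s j).ne'
    have e3 := (hA0 s t).ne'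
    field_simp
    linear_combination h1
end

section
/- Let M be an m×n real matrix with all entries positive and let a ∈ ℝ^m, p ∈ ℝ^n have all entries positive with ∑_{i=1}^m a_i = ∑_{j=1}^n p_j. Then there exist vectors x' ∈ ℝ^m and p' ∈ ℝ^n with all entries positive satisfying the asset-class equations x'_i · ∑_{j=1}^n M_{ij} p'_j = a_i for all i = 1, …, m and the portfolio equations p'_j · ∑_{i=1}^m M_{ij} x'_i = p_j for all j = 1, …, n; moreover x', p' may be chosen with p'_1 = 1. -/
/-- The log-potential. -/
noncomputable def auxF {m n : ℕ} (M : Fin m → Fin n → ℝ) (a : Fin m → ℝ) (p : Fin n → ℝ)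
    (q : Fin n → ℝ) : ℝ :=
  ∑ j, p j * Real.log (q j) - ∑ i, a i * Real.log (∑ j, M i j * q j)

/-- The potential in product form, continuous up to the boundary of the simplex. -/
noncomputable def auxG {m n : ℕ} (M : Fin m → Fin n → ℝ) (a : Fin m → ℝ) (p : Fin n → ℝ)
    (q : Fin n → ℝ) : ℝ :=
  (∏ j, (q j) ^ (p j)) * ∏ i, ((∑ j, M i j * q j) ^ (a i))⁻¹

lemma auxG_eq {m n : ℕ} (hn : 1 ≤ n) (M : Fin m → Fin n → ℝ) (hM : ∀ i j, 0 < M i j)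
    (a : Fin m → ℝ) (p : Fin n → ℝ) (q : Fin n → ℝ) (hq : ∀ j, 0 < q j) :
    auxG M a p q = Real.exp (auxF M a p q) := by
  have hpos : ∀ i, 0 < ∑ j, M i j * q j := fun i =>
    Finset.sum_pos (fun j _ => mul_pos (hM i j) (hq j)) ⟨⟨0, hn⟩, Finset.mem_univ _⟩
  unfold auxG auxF
  rw [sub_eq_add_neg, Real.exp_add, ← Finset.sum_neg_distrib, Real.exp_sum, Real.exp_sum]
  congr 1
  · refine Finset.prod_congr rfl fun j _ => ?_
    rw [Real.rpow_def_of_pos (hq j), mul_comm]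
  · refine Finset.prod_congr rfl fun i _ => ?_
    rw [Real.rpow_def_of_pos (hpos i), mul_comm, Real.exp_neg]

lemma auxF_smul {m n : ℕ} (hn : 1 ≤ n) (M : Fin m → Fin n → ℝ) (hM : ∀ i j, 0 < M i j)
    (a : Fin m → ℝ) (p : Fin n → ℝ) (hsum : ∑ i, a i = ∑ j, p j)
    (q : Fin n → ℝ) (hq : ∀ j, 0 < q j) (c : ℝ) (hc : 0 < c) :
    auxF M a p (fun j => c * q j) = auxF M a p q := by
  have hpos : ∀ i, 0 < ∑ j, M i j * q j := fun i =>
    Finset.sum_pos (fun j _ => mul_pos (hM i j) (hq j)) ⟨⟨0, hn⟩, Finset.mem_univ _⟩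
  unfold auxF
  have h1 : ∀ i, ∑ j, M i j * (c * q j) = c * ∑ j, M i j * q j := fun i => by
    rw [Finset.mul_sum]; exact Finset.sum_congr rfl fun j _ => by ring
  simp only [h1]
  have h2 : ∑ j, p j * Real.log (c * q j)
      = (∑ j, p j) * Real.log c + ∑ j, p j * Real.log (q j) := by
    rw [Finset.sum_mul, ← Finset.sum_add_distrib]
    refine Finset.sum_congr rfl fun j _ => ?_
    rw [Real.log_mul hc.ne' (hq j).ne']; ring
  have h3 : ∑ i, a i * Real.log (c * ∑ j, M i j * q j)
      = (∑ i, a i) * Real.log c + ∑ i, a i * Real.log (∑ j, M i j * q j) := by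
    rw [Finset.sum_mul, ← Finset.sum_add_distrib]
    refine Finset.sum_congr rfl fun i _ => ?_
    rw [Real.log_mul hc.ne' (hpos i).ne']; ring
  rw [h2, h3, hsum]; ring

lemma aux_max {m n : ℕ} (hn : 1 ≤ n) (M : Fin m → Fin n → ℝ) (hM : ∀ i j, 0 < M i j)
    (a : Fin m → ℝ) (p : Fin n → ℝ) (hp : ∀ j, 0 < p j)
    (hsum : ∑ i, a i = ∑ j, p j) :
    ∃ q : Fin n → ℝ, (∀ j, 0 < q j) ∧
      ∀ y : Fin n → ℝ, (∀ j, 0 < y j) → auxF M a p y ≤ auxF M a p q := by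
  have hnorm : ∀ y : Fin n → ℝ, (∀ j, 0 < y j) →
      ∃ z ∈ stdSimplex ℝ (Fin n), (∀ j, 0 < z j) ∧ auxF M a p z = auxF M a p y := by
    intro y hy
    have hS : 0 < ∑ j, y j :=
      Finset.sum_pos (fun j _ => hy j) ⟨⟨0, hn⟩, Finset.mem_univ _⟩
    have hz : ∀ j, 0 < (∑ j, y j)⁻¹ * y j := fun j => mul_pos (inv_pos.2 hS) (hy j)
    refine ⟨fun j => (∑ j, y j)⁻¹ * y j, ⟨fun j => (hz j).le, ?_⟩, hz,
      auxF_smul hn M hM a p hsum y hy _ (inv_pos.2 hS)⟩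
    rw [← Finset.mul_sum, inv_mul_cancel₀ hS.ne']
  obtain ⟨u, hu, hupos, -⟩ := hnorm (fun _ => 1) (fun _ => one_pos)
  have hcont : ContinuousOn (auxG M a p) (stdSimplex ℝ (Fin n)) := by
    unfold auxG
    refine ContinuousOn.mul ?_ ?_
    · refine continuousOn_finsetProd _ fun j _ => ?_
      exact ((continuous_apply j).continuousOn).rpow_const fun x _ => Or.inr (hp j).le
    · refine continuousOn_finsetProd _ fun i _ => ?_
      have hpos : ∀ q ∈ stdSimplex ℝ (Fin n), 0 < ∑ j, M i j * q j := by
        intro q hq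
        have hnn : ∀ j ∈ Finset.univ, 0 ≤ M i j * q j :=
          fun j _ => mul_nonneg (hM i j).le (hq.1 j)
        refine lt_of_le_of_ne (Finset.sum_nonneg hnn) fun h => ?_
        have h0 := (Finset.sum_eq_zero_iff_of_nonneg hnn).1 h.symm
        have h1 : ∑ j, q j = 0 := Finset.sum_eq_zero fun j hj => by
          rcases mul_eq_zero.1 (h0 j hj) with h | h
          · exact absurd h (hM i j).ne'
          · exact h
        rw [hq.2] at h1
        exact one_ne_zero h1
      refine ContinuousOn.inv₀ ?_ fun q hq => (Real.rpow_pos_of_pos (hpos q hq) _).ne'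
      refine ContinuousOn.rpow_const ?_ fun q hq => Or.inl (hpos q hq).ne'
      fun_prop
  obtain ⟨q, hq, hmax⟩ := (isCompact_stdSimplex ℝ (Fin n)).exists_isMaxOn ⟨u, hu⟩ hcont
  have hGq : 0 < auxG M a p q := by
    refine lt_of_lt_of_le ?_ (hmax hu)
    rw [auxG_eq hn M hM a p u hupos]
    exact Real.exp_pos _
  have hqpos : ∀ j, 0 < q j := by
    intro j
    refine lt_of_le_of_ne (hq.1 j) fun h => ?_
    have : auxG M a p q = 0 := by
      unfold auxG
      rw [Finset.prod_eq_zero (Finset.mem_univ j), zero_mul]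
      rw [← h, Real.zero_rpow (hp j).ne']
    exact hGq.ne' this
  refine ⟨q, hqpos, fun y hy => ?_⟩
  obtain ⟨z, hz, hzpos, hzF⟩ := hnorm y hy
  have h : auxG M a p z ≤ auxG M a p q := hmax hz
  rw [auxG_eq hn M hM a p z hzpos, auxG_eq hn M hM a p q hqpos, Real.exp_le_exp, hzF] at h
  exact h

lemma aux_crit {m n : ℕ} (hn : 1 ≤ n) (M : Fin m → Fin n → ℝ) (hM : ∀ i j, 0 < M i j)
    (a : Fin m → ℝ) (p : Fin n → ℝ) (q : Fin n → ℝ) (hq : ∀ j, 0 < q j)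
    (hmax : ∀ y : Fin n → ℝ, (∀ j, 0 < y j) → auxF M a p y ≤ auxF M a p q) (k : Fin n) :
    p k / q k = ∑ i, a i * (M i k / ∑ j, M i j * q j) := by
  have hpos : ∀ i, 0 < ∑ j, M i j * q j := fun i =>
    Finset.sum_pos (fun j _ => mul_pos (hM i j) (hq j)) ⟨⟨0, hn⟩, Finset.mem_univ _⟩
  let v : Fin n → ℝ := Pi.single k 1
  let c : ℝ → Fin n → ℝ := fun t j => q j + t * v j
  have hc0 : ∀ j, c 0 j = q j := fun j => by simp [c]
  have hcj : ∀ j, HasDerivAt (fun t => c t j) (v j) 0 := fun j => by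
    have h := ((hasDerivAt_id (0:ℝ)).mul_const (v j)).const_add (q j)
    rw [one_mul] at h
    exact h
  have hD : HasDerivAt (fun t => auxF M a p (c t))
      (∑ j, p j * (v j / c 0 j)
        - ∑ i, a i * ((∑ j, M i j * v j) / ∑ j, M i j * c 0 j)) 0 := by
    unfold auxF
    refine HasDerivAt.sub ?_ ?_
    · refine HasDerivAt.fun_sum fun j _ => ?_
      refine ((hcj j).log ?_).const_mul (p j)
      rw [hc0]; exact (hq j).ne'
    · refine HasDerivAt.fun_sum fun i _ => ?_
      refine (HasDerivAt.log (HasDerivAt.fun_sum fun j _ => (hcj j).const_mul (M i j))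
        ?_).const_mul (a i)
      simp only [hc0]; exact (hpos i).ne'
  have hloc : IsLocalMax (fun t => auxF M a p (c t)) 0 := by
    have hev : ∀ᶠ t in nhds (0:ℝ), ∀ j, 0 < c t j := by
      rw [Filter.eventually_all]
      intro j
      refine (hcj j).continuousAt.eventually (lt_mem_nhds ?_)
      change 0 < c 0 j
      rw [hc0]; exact hq j
    filter_upwards [hev] with t ht
    have : c 0 = q := funext hc0
    simp only [this]
    exact hmax _ ht
  have h0 := hloc.hasDerivAt_eq_zero hD
  simp only [hc0, v, Pi.single_apply, ite_div, zero_div, mul_ite, mul_zero, mul_one,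
    Finset.sum_ite_eq', Finset.mem_univ, if_true, mul_one_div] at h0
  linarith

/-- Existence of positive solutions to the asset-class and portfolio equations for an
entrywise positive target matrix and positive marginals with equal total sums;
moreover the solution can be normalised so that `p'₁ = 1`. -/
theorem market_invariant_equations_have_positive_solution
    (m n : ℕ) (hn : 1 ≤ n) (M : Fin m → Fin n → ℝ) (hM : ∀ i j, 0 < M i j)
    (a : Fin m → ℝ) (p : Fin n → ℝ) (ha : ∀ i, 0 < a i) (hp : ∀ j, 0 < p j)
    (hsum : ∑ i, a i = ∑ j, p j) :
    ∃ x' : Fin m → ℝ, ∃ p' : Fin n → ℝ,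
      (∀ i, 0 < x' i) ∧ (∀ j, 0 < p' j) ∧
      (∀ i, x' i * ∑ j, M i j * p' j = a i) ∧
      (∀ j, p' j * ∑ i, M i j * x' i = p j) ∧
      p' ⟨0, hn⟩ = 1 := by
  obtain ⟨q, hq, hmax⟩ := aux_max hn M hM a p hp hsum
  have hcrit := aux_crit hn M hM a p q hq hmax
  have hpos : ∀ i, 0 < ∑ j, M i j * q j := fun i =>
    Finset.sum_pos (fun j _ => mul_pos (hM i j) (hq j)) ⟨⟨0, hn⟩, Finset.mem_univ _⟩
  have hs : 0 < q ⟨0, hn⟩ := hq _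
  generalize hsq : q ⟨0, hn⟩ = s at hs
  refine ⟨fun i => s * (a i / ∑ j, M i j * q j), fun j => q j / s,
    fun i => mul_pos hs (div_pos (ha i) (hpos i)), fun j => div_pos (hq j) hs, ?_, ?_, ?_⟩
  · intro i
    have h1 : ∑ j, M i j * (q j / s) = (∑ j, M i j * q j) / s := by
      rw [Finset.sum_div]; exact Finset.sum_congr rfl fun j _ => by ring
    have := (hpos i).ne'
    simp only [h1]
    field_simp
  · intro j
    have h1 : ∑ i, M i j * (s * (a i / ∑ j, M i j * q j)) = s * (p j / q j) := by
      rw [hcrit, Finset.mul_sum]; exact Finset.sum_congr rfl fun i _ => by ring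
    have := (hq j).ne'
    simp only [h1]
    field_simp
  · simp only [hsq]
    exact div_self hs.ne'
end

section
/- Let M be an m×n real matrix with all entries positive and let a ∈ ℝ^m, p ∈ ℝ^n have all entries positive with ∑_{i=1}^m a_i = ∑_{j=1}^n p_j. Suppose x, x̂ ∈ ℝ^m and y, ŷ ∈ ℝ^n all have positive entries, and suppose both matrices A_{ij} = x_i M_{ij} y_j and Â_{ij} = x̂_i M_{ij} ŷ_j satisfy ∑_{j=1}^n A_{ij} = ∑_{j=1}^n Â_{ij} = a_i for every i and ∑_{i=1}^m A_{ij} = ∑_{i=1}^m Â_{ij} = p_j for every j. Then A = Â (entrywise), and moreover there exists t > 0 such that x̂_i = t·x_i for all i and ŷ_j = (1/t)·y_j for all j. In other words, the positive biproportional matrix with prescribed row sums a and column sums p is unique, and the scaling vectors are unique up to a single positive scalar. -/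
/-- Uniqueness of the positive biproportional matrix with prescribed marginals: two
entrywise positive biproportional scalings of `M` with the same row sums `a` and
column sums `p` coincide, and the scaling vectors agree up to a single positive
scalar `t`. -/
theorem biproportional_unique
    (m n : ℕ) (M : Fin m → Fin n → ℝ) (hM : ∀ i j, 0 < M i j)
    (a : Fin m → ℝ) (p : Fin n → ℝ) (ha : ∀ i, 0 < a i) (hp : ∀ j, 0 < p j)
    (hsum : ∑ i, a i = ∑ j, p j)
    (x xh : Fin m → ℝ) (y yh : Fin n → ℝ)
    (hx : ∀ i, 0 < x i) (hxh : ∀ i, 0 < xh i)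
    (hy : ∀ j, 0 < y j) (hyh : ∀ j, 0 < yh j)
    (A Ah : Fin m → Fin n → ℝ)
    (hA : ∀ i j, A i j = x i * M i j * y j)
    (hAh : ∀ i j, Ah i j = xh i * M i j * yh j)
    (hArow : ∀ i, ∑ j, A i j = a i) (hAhrow : ∀ i, ∑ j, Ah i j = a i)
    (hAcol : ∀ j, ∑ i, A i j = p j) (hAhcol : ∀ j, ∑ i, Ah i j = p j) :
    A = Ah ∧
    ∃ t : ℝ, 0 < t ∧ (∀ i, xh i = t * x i) ∧ (∀ j, yh j = (1 / t) * y j) := by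
  rcases Nat.eq_zero_or_pos m with hm | hm
  · subst hm
    refine ⟨by funext i; exact i.elim0, 1, one_pos, fun i => i.elim0, fun j => ?_⟩
    have h1 := hAcol j
    have h2 := hp j
    simp at h1
    linarith
  haveI : Nonempty (Fin m) := ⟨⟨0, hm⟩⟩
  obtain ⟨i0, hi0⟩ := Finite.exists_max (fun i => xh i / x i)
  set t := xh i0 / x i0 with ht
  have htpos : 0 < t := div_pos (hxh _) (hx _)
  have hxt : xh i0 = t * x i0 := by rw [ht, div_mul_cancel₀ _ (hx i0).ne']
  have hle : ∀ i, xh i ≤ t * x i := fun i => (div_le_iff₀ (hx i)).1 (hi0 i)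
  have hyle : ∀ j, y j ≤ t * yh j := by
    intro j
    have h1 : ∑ i, Ah i j * y j ≤ ∑ i, A i j * (t * yh j) := by
      apply Finset.sum_le_sum
      intro i _
      rw [hA, hAh]
      have h := mul_le_mul_of_nonneg_right (hle i)
        (mul_pos (mul_pos (hM i j) (hy j)) (hyh j)).le
      linarith
    rw [← Finset.sum_mul, ← Finset.sum_mul, hAcol, hAhcol] at h1
    exact le_of_mul_le_mul_left h1 (hp j)
  have hle0 : ∀ j ∈ Finset.univ, A i0 j ≤ Ah i0 j := by
    intro j _
    rw [hA, hAh, hxt]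
    have h := mul_le_mul_of_nonneg_left (hyle j) (mul_pos (hx i0) (hM i0 j)).le
    linarith
  have heq0 := (Finset.sum_eq_sum_iff_of_le hle0).1 ((hArow i0).trans (hAhrow i0).symm)
  have hyt : ∀ j, y j = t * yh j := by
    intro j
    have h := heq0 j (Finset.mem_univ j)
    rw [hA, hAh, hxt] at h
    apply mul_left_cancel₀ (mul_pos (hx i0) (hM i0 j)).ne'
    linarith
  have hxall : ∀ i, xh i = t * x i := by
    intro i
    have h1 : ∑ j, A i j * xh i = ∑ j, Ah i j * (t * x i) := by
      apply Finset.sum_congr rfl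
      intro j _
      rw [hA, hAh, hyt]
      ring
    rw [← Finset.sum_mul, ← Finset.sum_mul, hArow, hAhrow] at h1
    exact mul_left_cancel₀ (ha i).ne' h1
  refine ⟨?_, t, htpos, hxall, fun j => ?_⟩
  · funext i j
    rw [hA, hAh, hxall, hyt]
    ring
  · rw [hyt j]
    field_simp
end

section
/- Let M be an m×n real matrix with all entries positive and let a ∈ ℝ^m, p ∈ ℝ^n have all entries positive with ∑_{i=1}^m a_i = ∑_{j=1}^n p_j. Suppose A^$_{ij} = x_i M_{ij} y_j with x ∈ ℝ^m, y ∈ ℝ^n having positive entries, and suppose ∑_{j=1}^n A^$_{ij} = a_i for every i and ∑_{i=1}^m A^$_{ij} = p_j for every j. Then for every m×n real matrix B with nonnegative entries satisfying ∑_{j=1}^n B_{ij} = a_i for every i and ∑_{i=1}^m B_{ij} = p_j for every j, one has ∑_{i,j} B_{ij} log(B_{ij}/M_{ij}) ≥ ∑_{i,j} A^$_{ij} log(A^$_{ij}/M_{ij}), where terms with B_{ij} = 0 are interpreted as 0; and equality holds if and only if B = A^$. That is, the market-invariant (biproportional) solution is the unique minimiser of the Kullback–Leibler-type information objective over all nonnegative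 matrices with the prescribed marginals. -/
/-- The market-invariant (biproportional) solution is the unique minimiser of the
Kullback–Leibler-type information objective `∑ B_{ij} log(B_{ij}/M_{ij})` over all
nonnegative matrices `B` with row sums `a` and column sums `p`. (Terms with
`B_{ij} = 0` vanish automatically since `0 * log 0 = 0` in Lean.) -/
theorem biproportional_minimises_KL
    (m n : ℕ) (M : Fin m → Fin n → ℝ) (hM : ∀ i j, 0 < M i j)
    (a : Fin m → ℝ) (p : Fin n → ℝ) (ha : ∀ i, 0 < a i) (hp : ∀ j, 0 < p j)
    (hsum : ∑ i, a i = ∑ j, p j)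
    (x : Fin m → ℝ) (y : Fin n → ℝ) (hx : ∀ i, 0 < x i) (hy : ∀ j, 0 < y j)
    (A : Fin m → Fin n → ℝ)
    (hA : ∀ i j, A i j = x i * M i j * y j)
    (hArow : ∀ i, ∑ j, A i j = a i)
    (hAcol : ∀ j, ∑ i, A i j = p j) :
    ∀ B : Fin m → Fin n → ℝ,
      (∀ i j, 0 ≤ B i j) →
      (∀ i, ∑ j, B i j = a i) →
      (∀ j, ∑ i, B i j = p j) →
      (∑ i, ∑ j, A i j * Real.log (A i j / M i j) ≤
        ∑ i, ∑ j, B i j * Real.log (B i j / M i j)) ∧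
      ((∑ i, ∑ j, B i j * Real.log (B i j / M i j) =
        ∑ i, ∑ j, A i j * Real.log (A i j / M i j)) ↔ B = A) := by
  intro B hB hBrow hBcol
  have hApos : ∀ i j, 0 < A i j := fun i j => by
    rw [hA]; exact mul_pos (mul_pos (hx i) (hM i j)) (hy j)
  have hlin : ∀ C : Fin m → Fin n → ℝ, (∀ i, ∑ j, C i j = a i) → (∀ j, ∑ i, C i j = p j) →
      ∑ i, ∑ j, C i j * (Real.log (x i) + Real.log (y j)) =
        ∑ i, a i * Real.log (x i) + ∑ j, p j * Real.log (y j) := by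
    intro C hr hc
    simp only [mul_add, Finset.sum_add_distrib]
    congr 1
    · refine Finset.sum_congr rfl fun i _ => ?_
      rw [← Finset.sum_mul, hr]
    · rw [Finset.sum_comm]
      refine Finset.sum_congr rfl fun j _ => ?_
      rw [← Finset.sum_mul, hc]
  have hAM : ∀ i j, Real.log (A i j / M i j) = Real.log (x i) + Real.log (y j) := by
    intro i j
    rw [← Real.log_mul (hx i).ne' (hy j).ne']
    congr 1
    rw [hA]
    have := (hM i j).ne'
    field_simp
  have hterm : ∀ i j, B i j * Real.log (B i j / M i j) =
      A i j * InformationTheory.klFun (B i j / A i j) - A i j + B i j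
        + B i j * (Real.log (x i) + Real.log (y j)) := by
    intro i j
    have h1 := (hApos i j).ne'
    have h2 := (hM i j).ne'
    rw [InformationTheory.klFun_apply, ← hAM]
    rcases (hB i j).eq_or_lt with h | h
    · rw [← h]; simp
    · rw [Real.log_div h.ne' h1, Real.log_div h.ne' h2, Real.log_div h1 h2]
      field_simp
      ring
  have hkey : ∑ i, ∑ j, B i j * Real.log (B i j / M i j) =
      ∑ i, ∑ j, A i j * InformationTheory.klFun (B i j / A i j) +
        ∑ i, ∑ j, A i j * Real.log (A i j / M i j) := by
    simp only [hterm, hAM]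
    simp only [Finset.sum_add_distrib, Finset.sum_sub_distrib]
    rw [hlin A hArow hAcol, hlin B hBrow hBcol]
    simp only [hArow, hBrow]
    ring
  have hnn : ∀ i j, 0 ≤ A i j * InformationTheory.klFun (B i j / A i j) := fun i j =>
    mul_nonneg (hApos i j).le
      (InformationTheory.klFun_nonneg (div_nonneg (hB i j) (hApos i j).le))
  have hnn' : ∀ i, 0 ≤ ∑ j, A i j * InformationTheory.klFun (B i j / A i j) := fun i =>
    Finset.sum_nonneg fun j _ => hnn i j
  refine ⟨?_, ?_, ?_⟩
  · rw [hkey]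
    have := Finset.sum_nonneg fun i (_ : i ∈ Finset.univ) => hnn' i
    linarith
  · intro h
    rw [hkey, add_eq_right, Finset.sum_eq_zero_iff_of_nonneg fun i _ => hnn' i] at h
    funext i j
    have h1 := (Finset.sum_eq_zero_iff_of_nonneg fun j _ => hnn i j).1
      (h i (Finset.mem_univ i)) j (Finset.mem_univ j)
    have h2 := (mul_eq_zero.1 h1).resolve_left (hApos i j).ne'
    rw [InformationTheory.klFun_eq_zero_iff (div_nonneg (hB i j) (hApos i j).le),
      div_eq_one_iff_eq (hApos i j).ne'] at h2
    exact h2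
  · rintro rfl
    rfl
end

section
/- Let T ≥ 1 and m ≥ 1, and let R : {1,…,m} × {1,…,T} → ℝ satisfy R(i,t) > 0 for all i, t and ∏_{t=1}^T R(i,t) = 1 for each i (tethered gross returns). Then for every tuple of indices (i₁, …, i_T) ∈ {1,…,m}^T, averaging over the symmetric group S_T gives (1/T!) · ∑_{σ ∈ S_T} ∏_{t=1}^T R(i_{σ(t)}, t) ≥ 1. Equivalently, the sum over all distinct permutations of the multiset {i₁, …, i_T} of the products ∏_t R(σ_t, t) is at least the number of such distinct permutations. -/
theorem perm_sum_zero_aux (T : ℕ) (hT : 1 ≤ T) (L : Fin T → Fin T → ℝ)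
    (hL : ∀ s, ∑ t, L s t = 0) :
    ∑ σ : Equiv.Perm (Fin T), ∑ t, L (σ t) t = 0 := by
  haveI : NeZero T := ⟨by omega⟩
  have h1 : ∑ σ : Equiv.Perm (Fin T), ∑ t, L (σ t) t
      = ∑ σ : Equiv.Perm (Fin T), ∑ s, L s (σ s) := by
    rw [← Equiv.sum_comp (Equiv.inv (Equiv.Perm (Fin T)))]
    refine Finset.sum_congr rfl fun σ _ => ?_
    rw [← Equiv.sum_comp σ]
    simp
  rw [h1, Finset.sum_comm]
  refine Finset.sum_eq_zero fun s _ => ?_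
  have h2 : ∀ c : Fin T, ∑ σ : Equiv.Perm (Fin T), L s (σ s)
      = ∑ σ : Equiv.Perm (Fin T), L s (σ s + c) := by
    intro c
    rw [← Equiv.sum_comp (Equiv.mulLeft (Equiv.addRight c : Equiv.Perm (Fin T)))]
    simp
  have h3 : ∑ _c : Fin T, ∑ σ : Equiv.Perm (Fin T), L s (σ s) = 0 := by
    rw [Finset.sum_congr rfl fun c _ => h2 c, Finset.sum_comm]
    refine Finset.sum_eq_zero fun σ _ => ?_
    rw [← hL s]
    exact Equiv.sum_comp (Equiv.addLeft (σ s)) (L s)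
  rw [Finset.sum_const, Finset.card_univ, Fintype.card_fin, nsmul_eq_mul] at h3
  rcases mul_eq_zero.1 h3 with h | h
  · exact absurd h (by exact_mod_cast NeZero.ne T)
  · exact h

/-- For tethered gross returns (every asset class has total gross return `1` over the
horizon), the average over all permutations `σ` of the horizon of the products
`∏_t R(i_{σ(t)}, t)` is at least `1`, for every tuple of asset-class indices. -/
theorem tethered_returns_permutation_average_ge_one
    (m T : ℕ) (hm : 1 ≤ m) (hT : 1 ≤ T)
    (R : Fin m → Fin T → ℝ)
    (hR : ∀ i t, 0 < R i t)
    (hteth : ∀ i, ∏ t, R i t = 1)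
    (idx : Fin T → Fin m) :
    1 ≤ (1 / (Nat.factorial T : ℝ)) *
        ∑ σ : Equiv.Perm (Fin T), ∏ t, R (idx (σ t)) t := by
  have h0 := perm_sum_zero_aux T hT (fun s t => Real.log (R (idx s) t)) (by
    intro s
    rw [← Real.log_prod (fun t _ => (hR _ t).ne'), hteth, Real.log_one])
  have h1 : ∑ σ : Equiv.Perm (Fin T), (1 + ∑ t, Real.log (R (idx (σ t)) t))
      ≤ ∑ σ : Equiv.Perm (Fin T), ∏ t, R (idx (σ t)) t := by
    refine Finset.sum_le_sum fun σ _ => ?_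
    rw [← Real.log_prod (fun t _ => (hR _ t).ne')]
    have := Real.log_le_sub_one_of_pos
      (Finset.prod_pos (s := Finset.univ) fun t _ => hR (idx (σ t)) t)
    linarith
  rw [Finset.sum_add_distrib, h0, Finset.sum_const, Finset.card_univ, Fintype.card_perm,
    Fintype.card_fin, nsmul_eq_mul, mul_one, add_zero] at h1
  have h2 : (0 : ℝ) < (Nat.factorial T : ℝ) := by exact_mod_cast Nat.factorial_pos T
  rw [one_div, inv_mul_eq_div, le_div_iff₀ h2, one_mul]
  exact h1
end

section
/- Let T ≥ 1 and m ≥ 1, let R : {1,…,m} × {1,…,T} → ℝ satisfy R(i,t) > 0 for all i, t and ∏_{t=1}^T R(i,t) = 1 for each i (tethered gross returns), and let w ∈ ℝ^m satisfy w_i ≥ 0 for all i and ∑_{i=1}^m w_i = 1 (a target weight vector). Then ∏_{t=1}^T ( ∑_{i=1}^m w_i · R(i,t) ) ≥ 1. Moreover, the inequality is strict if there exist a period t and indices i₁, i₂ with w_{i₁} > 0, w_{i₂} > 0 and R(i₁,t) ≠ R(i₂,t); in particular, a portfolio rebalanced to fixed target weights w at every period ends with at least its initial value, and strictly more unless all asset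 classes in its support move in unison at every period. -/
/-- A portfolio rebalanced to fixed target weights `w` every period, under tethered
gross returns, ends with at least its initial value: `∏_t ∑_i w_i R(i,t) ≥ 1`; the
inequality is strict whenever two asset classes in the support of `w` have different
returns in some period. -/
theorem tethered_returns_fixed_weights_ge_one
    (m T : ℕ) (hm : 1 ≤ m) (hT : 1 ≤ T)
    (R : Fin m → Fin T → ℝ)
    (hR : ∀ i t, 0 < R i t)
    (hteth : ∀ i, ∏ t, R i t = 1)
    (w : Fin m → ℝ) (hw : ∀ i, 0 ≤ w i) (hw1 : ∑ i, w i = 1) :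
    1 ≤ ∏ t, ∑ i, w i * R i t ∧
    ((∃ t : Fin T, ∃ i₁ i₂ : Fin m,
        0 < w i₁ ∧ 0 < w i₂ ∧ R i₁ t ≠ R i₂ t) →
      1 < ∏ t, ∑ i, w i * R i t) := by
  have hgm : ∏ t, ∏ i, R i t ^ w i = 1 := by
    rw [Finset.prod_comm]
    refine Finset.prod_eq_one fun i _ => ?_
    rw [Real.finsetProd_rpow _ _ (fun t _ => (hR i t).le), hteth, Real.one_rpow]
  have hpos : ∀ t, 0 < ∏ i, R i t ^ w i := fun t =>
    Finset.prod_pos fun i _ => Real.rpow_pos_of_pos (hR i t) _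
  have hle : ∀ t, ∏ i, R i t ^ w i ≤ ∑ i, w i * R i t := fun t =>
    Real.geom_mean_le_arith_mean_weighted Finset.univ w (fun i => R i t)
      (fun i _ => hw i) hw1 (fun i _ => (hR i t).le)
  refine ⟨?_, ?_⟩
  · rw [← hgm]
    exact Finset.prod_le_prod (fun t _ => (hpos t).le) (fun t _ => hle t)
  · rintro ⟨t, i₁, i₂, h1, h2, hne⟩
    rw [← hgm]
    refine Finset.prod_lt_prod (fun t _ => hpos t) (fun t _ => hle t)
      ⟨t, Finset.mem_univ _, lt_of_le_of_ne (hle t) fun heq => hne ?_⟩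
    have h := (Real.geom_mean_eq_arith_mean_weighted_iff_of_nonneg' Finset.univ w
      (fun i => R i t) (fun i _ => hw i) hw1 (fun i _ => (hR i t).le)).1 heq
    exact (h i₁ (Finset.mem_univ _) h1.ne').trans (h i₂ (Finset.mem_univ _) h2.ne').symm
end

section
/- Let M be an m×n real matrix with nonnegative entries whose columns each sum to 1, let p ∈ ℝ^n have all entries positive, fix a banker index j_b ∈ {1,…,n}, and let R : {1,…,m} × {1,…,T} → ℝ satisfy R(i,t) > 0 for all i, t and ∏_{t=1}^T R(i,t) = 1 for each i (tethered gross returns). Under the banker rebalancing process each non-banker portfolio j ≠ j_b is held at its target weights every period, so its final value is p_j · ∏_{t=1}^T ( ∑_{i=1}^m M_{ij} · R(i,t) ), while internal rebalancing preserves total wealth, so the banker's final value is p_{j_b}^T := ∑_{j=1}^n p_j − ∑_{j ≠ j_b} p_j · ∏_{t=1}^T ( ∑_{i=1}^m M_{ij} · R(i,t) ). Then p_{j_b}^T ≤ p_{j_b}, and the inequality is strict (the banker portfolio loses value) whenever there exist a period t, indices i₁, i₂, and a column j ≠ j_b with M_{i₁ j} > 0, M_{i₂ j} > 0 and R(i₁,t)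 ≠ R(i₂,t). -/
theorem col_pos {m : ℕ} (w r : Fin m → ℝ) (hw : ∀ i, 0 ≤ w i) (hs : ∑ i, w i = 1)
    (hr : ∀ i, 0 < r i) : 0 < ∑ i, w i * r i := by
  obtain ⟨i, hi⟩ : ∃ i, 0 < w i := by
    by_contra! h
    have : ∑ i, w i ≤ 0 := Finset.sum_nonpos fun i _ => h i
    linarith
  exact Finset.sum_pos' (fun i _ => mul_nonneg (hw i) (hr i).le)
    ⟨i, Finset.mem_univ i, mul_pos hi (hr i)⟩

theorem col_gap {m : ℕ} (w r : Fin m → ℝ) (hs : ∑ i, w i = 1)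
    (hr : ∀ i, 0 < r i) (S : ℝ) (hS : S = ∑ i, w i * r i) (hS0 : 0 < S) :
    Real.log S - ∑ i, w i * Real.log (r i) =
      ∑ i, w i * (r i / S - 1 - Real.log (r i / S)) := by
  have h1 : ∀ i, w i * (r i / S - 1 - Real.log (r i / S)) =
      (w i * r i) / S - w i - w i * Real.log (r i) + w i * Real.log S := by
    intro i
    rw [Real.log_div (hr i).ne' hS0.ne']
    ring
  simp_rw [h1]
  rw [Finset.sum_add_distrib, Finset.sum_sub_distrib, Finset.sum_sub_distrib,
    ← Finset.sum_div, ← Finset.sum_mul, hs, ← hS, div_self hS0.ne']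
  ring

theorem col_le {m : ℕ} (w r : Fin m → ℝ) (hw : ∀ i, 0 ≤ w i) (hs : ∑ i, w i = 1)
    (hr : ∀ i, 0 < r i) : ∑ i, w i * Real.log (r i) ≤ Real.log (∑ i, w i * r i) := by
  have hS0 := col_pos w r hw hs hr
  have h := col_gap w r hs hr _ rfl hS0
  have : 0 ≤ ∑ i, w i * (r i / (∑ i, w i * r i) - 1 - Real.log (r i / (∑ i, w i * r i))) :=
    Finset.sum_nonneg fun i _ => mul_nonneg (hw i)
      (sub_nonneg.2 (Real.log_le_sub_one_of_pos (div_pos (hr i) hS0)))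
  linarith

theorem col_lt {m : ℕ} (w r : Fin m → ℝ) (hw : ∀ i, 0 ≤ w i) (hs : ∑ i, w i = 1)
    (hr : ∀ i, 0 < r i) (a b : Fin m) (ha : 0 < w a) (hb : 0 < w b) (hab : r a ≠ r b) :
    ∑ i, w i * Real.log (r i) < Real.log (∑ i, w i * r i) := by
  have hS0 := col_pos w r hw hs hr
  have h := col_gap w r hs hr _ rfl hS0
  obtain ⟨c, hc, hcS⟩ : ∃ c, 0 < w c ∧ r c ≠ ∑ i, w i * r i := by
    by_cases h1 : r a = ∑ i, w i * r i
    · exact ⟨b, hb, fun h2 => hab (h1.trans h2.symm)⟩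
    · exact ⟨a, ha, h1⟩
  have : 0 < ∑ i, w i * (r i / (∑ i, w i * r i) - 1 - Real.log (r i / (∑ i, w i * r i))) := by
    refine Finset.sum_pos' (fun i _ => mul_nonneg (hw i)
      (sub_nonneg.2 (Real.log_le_sub_one_of_pos (div_pos (hr i) hS0))))
      ⟨c, Finset.mem_univ c, mul_pos hc (sub_pos.2 (Real.log_lt_sub_one_of_pos
        (div_pos (hr c) hS0) ?_))⟩
    rw [Ne, div_eq_one_iff_eq hS0.ne']
    exact hcS
  linarith

theorem sum_log_zero {m T : ℕ} (w : Fin m → ℝ) (R : Fin m → Fin T → ℝ)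
    (hR : ∀ i t, 0 < R i t) (hteth : ∀ i, ∏ t, R i t = 1) :
    ∑ t, ∑ i, w i * Real.log (R i t) = 0 := by
  rw [Finset.sum_comm]
  refine Finset.sum_eq_zero fun i _ => ?_
  rw [← Finset.mul_sum, ← Real.log_prod (fun t _ => (hR i t).ne'), hteth i]
  simp

theorem prod_ge {m T : ℕ} (w : Fin m → ℝ) (R : Fin m → Fin T → ℝ) (hw : ∀ i, 0 ≤ w i)
    (hs : ∑ i, w i = 1) (hR : ∀ i t, 0 < R i t) (hteth : ∀ i, ∏ t, R i t = 1) :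
    1 ≤ ∏ t, ∑ i, w i * R i t := by
  have hpos : ∀ t, 0 < ∑ i, w i * R i t := fun t => col_pos w _ hw hs fun i => hR i t
  rw [← Real.log_nonneg_iff (Finset.prod_pos fun t _ => hpos t),
    Real.log_prod (fun t _ => (hpos t).ne'), ← sum_log_zero w R hR hteth]
  exact Finset.sum_le_sum fun t _ => col_le w (fun i => R i t) hw hs fun i => hR i t

theorem prod_gt {m T : ℕ} (w : Fin m → ℝ) (R : Fin m → Fin T → ℝ) (hw : ∀ i, 0 ≤ w i)
    (hs : ∑ i, w i = 1) (hR : ∀ i t, 0 < R i t) (hteth : ∀ i, ∏ t, R i t = 1)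
    (t : Fin T) (a b : Fin m) (ha : 0 < w a) (hb : 0 < w b) (hab : R a t ≠ R b t) :
    1 < ∏ t, ∑ i, w i * R i t := by
  have hpos : ∀ t, 0 < ∑ i, w i * R i t := fun t => col_pos w _ hw hs fun i => hR i t
  rw [← Real.log_pos_iff (Finset.prod_pos fun t _ => hpos t).le,
    Real.log_prod (fun t _ => (hpos t).ne'), ← sum_log_zero w R hR hteth]
  exact Finset.sum_lt_sum (fun t _ => col_le w (fun i => R i t) hw hs fun i => hR i t)
    ⟨t, Finset.mem_univ t, col_lt w (fun i => R i t) hw hs (fun i => hR i t) a b ha hb hab⟩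

/-- The banker rebalancing process disadvantages the banker under tethered returns:
each non-banker portfolio `j` ends at `p_j · ∏_t ∑_i M_{ij} R(i,t)` and the banker
receives the remaining wealth `p_{j_b}^T = ∑_j p_j − ∑_{j ≠ j_b} p_j ∏_t ∑_i M_{ij} R(i,t)`,
which satisfies `p_{j_b}^T ≤ p_{j_b}`, with strict inequality whenever some non-banker
column has two supported asset classes with different returns in some period. -/
theorem banker_disadvantaged_tethered
    (m n T : ℕ) (M : Fin m → Fin n → ℝ)
    (hM : ∀ i j, 0 ≤ M i j) (hMcol : ∀ j, ∑ i, M i j = 1)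
    (p : Fin n → ℝ) (hp : ∀ j, 0 < p j)
    (jb : Fin n)
    (R : Fin m → Fin T → ℝ)
    (hR : ∀ i t, 0 < R i t)
    (hteth : ∀ i, ∏ t, R i t = 1)
    (pT : ℝ)
    (hpT : pT = (∑ j, p j) -
        ∑ j ∈ Finset.univ.erase jb, p j * ∏ t, ∑ i, M i j * R i t) :
    pT ≤ p jb ∧
    ((∃ t : Fin T, ∃ i₁ i₂ : Fin m, ∃ j : Fin n,
        j ≠ jb ∧ 0 < M i₁ j ∧ 0 < M i₂ j ∧ R i₁ t ≠ R i₂ t) →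
      pT < p jb) := by
  have hsplit := Finset.add_sum_erase Finset.univ p (Finset.mem_univ jb)
  have hle : ∀ j ∈ Finset.univ.erase jb, p j ≤ p j * ∏ t, ∑ i, M i j * R i t :=
    fun j _ => le_mul_of_one_le_right (hp j).le
      (prod_ge (fun i => M i j) R (fun i => hM i j) (hMcol j) hR hteth)
  constructor
  · have := Finset.sum_le_sum hle
    linarith
  · rintro ⟨t, a, b, j, hj, ha, hb, hab⟩
    have := Finset.sum_lt_sum hle ⟨j, Finset.mem_erase.2 ⟨hj, Finset.mem_univ j⟩,
      lt_mul_of_one_lt_right (hp j)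
        (prod_gt (fun i => M i j) R (fun i => hM i j) (hMcol j) hR hteth t a b ha hb hab)⟩
    linarith
end

section
/- Let M be an m×n real matrix with all entries positive, let a ∈ ℝ^m and p ∈ ℝ^n have all entries positive with ∑_{i=1}^m a_i = ∑_{j=1}^n p_j, and let A^$_{ij} = x'_i M_{ij} p'_j (with x' ∈ ℝ^m, p' ∈ ℝ^n positive) satisfy ∑_{j=1}^n A^$_{ij} = a_i for all i and ∑_{i=1}^m A^$_{ij} = p_j for all j. Let x ∈ ℝ^m have all entries positive (a proportional market movement of the asset classes), and define the moved totals a_{x,i} = x_i a_i and p_{x,j} = ∑_{i=1}^m x_i A^$_{ij}. Then ∑_{i=1}^m a_{x,i} = ∑_{j=1}^n p_{x,j}, and the matrix A^$_x with entries (A^$_x)_{ij} = x_i A^$_{ij} is biproportional to M (indeed (A^$_x)_{ij} = (x_i x'_i) M_{ij} p'_j), has all entries positive, row sums a_x and column sums p_x; consequently A^$_x is the unique nonnegative biproportional solution of the rebalancing problem (M, a_x, p_x), so the market-invariant rebalancing process satisfies the market-invariance property: after a market movement x it reallocates nothing between portfolios. -/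
/-- Two positive matrices with equal margins whose log-ratio is additive are equal. -/
theorem biprop_unique {m n : ℕ} (B C : Fin m → Fin n → ℝ)
    (hB : ∀ i j, 0 < B i j) (hC : ∀ i j, 0 < C i j)
    (f : Fin m → ℝ) (g : Fin n → ℝ)
    (hfg : ∀ i j, Real.log (B i j) - Real.log (C i j) = f i + g j)
    (hr : ∀ i, ∑ j, B i j = ∑ j, C i j) (hc : ∀ j, ∑ i, B i j = ∑ i, C i j) : B = C := by
  have h0 : ∑ i, ∑ j, (B i j - C i j) * (Real.log (B i j) - Real.log (C i j)) = 0 := by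
    simp only [hfg, mul_add, Finset.sum_add_distrib]
    have h1 : ∑ i, ∑ j, (B i j - C i j) * f i = 0 := by
      apply Finset.sum_eq_zero
      intro i _
      rw [← Finset.sum_mul, Finset.sum_sub_distrib, hr i, sub_self, zero_mul]
    have h2 : ∑ i, ∑ j, (B i j - C i j) * g j = 0 := by
      rw [Finset.sum_comm]
      apply Finset.sum_eq_zero
      intro j _
      rw [← Finset.sum_mul, Finset.sum_sub_distrib, hc j, sub_self, zero_mul]
    rw [h1, h2, add_zero]
  have hnn : ∀ i j, 0 ≤ (B i j - C i j) * (Real.log (B i j) - Real.log (C i j)) := by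
    intro i j
    rcases le_total (B i j) (C i j) with h | h
    · exact mul_nonneg_of_nonpos_of_nonpos (sub_nonpos.2 h)
        (sub_nonpos.2 (Real.log_le_log (hB i j) h))
    · exact mul_nonneg (sub_nonneg.2 h) (sub_nonneg.2 (Real.log_le_log (hC i j) h))
  funext i j
  have h1 := (Finset.sum_eq_zero_iff_of_nonneg
    (fun i _ => Finset.sum_nonneg (fun j _ => hnn i j))).1 h0 i (Finset.mem_univ i)
  have h2 := (Finset.sum_eq_zero_iff_of_nonneg (fun j _ => hnn i j)).1 h1 j (Finset.mem_univ j)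
  rcases mul_eq_zero.1 h2 with h | h
  · exact sub_eq_zero.1 h
  · exact Real.log_injOn_pos (hB i j) (hC i j) (sub_eq_zero.1 h)

/-- The market-invariance property of the market-invariant rebalancing process: if
`A$` is the positive biproportional solution for `(M, a, p)` and a proportional market
movement `x` multiplies asset class `i` by `x_i`, then the moved totals
`a_x = x ⊙ a`, `p_{x,j} = ∑_i x_i A$_{ij}` again have equal sums, and the moved matrix
`(A$_x)_{ij} = x_i A$_{ij}` is biproportional to `M`, entrywise positive, has row sums
`a_x`, column sums `p_x`, and is the unique nonnegative biproportional solution of the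
rebalancing problem `(M, a_x, p_x)` — so nothing is reallocated between portfolios. -/
theorem market_invariance_property
    (m n : ℕ) (M : Fin m → Fin n → ℝ) (hM : ∀ i j, 0 < M i j)
    (a : Fin m → ℝ) (p : Fin n → ℝ) (ha : ∀ i, 0 < a i) (hp : ∀ j, 0 < p j)
    (hsum : ∑ i, a i = ∑ j, p j)
    (x' : Fin m → ℝ) (p' : Fin n → ℝ) (hx' : ∀ i, 0 < x' i) (hp' : ∀ j, 0 < p' j)
    (A : Fin m → Fin n → ℝ)
    (hA : ∀ i j, A i j = x' i * M i j * p' j)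
    (hArow : ∀ i, ∑ j, A i j = a i)
    (hAcol : ∀ j, ∑ i, A i j = p j)
    (x : Fin m → ℝ) (hx : ∀ i, 0 < x i)
    (ax : Fin m → ℝ) (hax : ∀ i, ax i = x i * a i)
    (px : Fin n → ℝ) (hpx : ∀ j, px j = ∑ i, x i * A i j)
    (Ax : Fin m → Fin n → ℝ) (hAx : ∀ i j, Ax i j = x i * A i j) :
    (∑ i, ax i = ∑ j, px j) ∧
    (∀ i j, Ax i j = (x i * x' i) * M i j * p' j) ∧
    (∀ i j, 0 < Ax i j) ∧
    (∀ i, ∑ j, Ax i j = ax i) ∧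
    (∀ j, ∑ i, Ax i j = px j) ∧
    (∀ B : Fin m → Fin n → ℝ,
      (∀ i j, 0 ≤ B i j) →
      (∃ u : Fin m → ℝ, ∃ v : Fin n → ℝ,
        (∀ i, 0 < u i) ∧ (∀ j, 0 < v j) ∧ ∀ i j, B i j = u i * M i j * v j) →
      (∀ i, ∑ j, B i j = ax i) →
      (∀ j, ∑ i, B i j = px j) →
      B = Ax) := by
  have hform : ∀ i j, Ax i j = (x i * x' i) * M i j * p' j := by
    intro i j
    rw [hAx, hA]
    ring
  have hpos : ∀ i j, 0 < Ax i j := by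
    intro i j
    rw [hform]
    exact mul_pos (mul_pos (mul_pos (hx i) (hx' i)) (hM i j)) (hp' j)
  have hrow : ∀ i, ∑ j, Ax i j = ax i := by
    intro i
    simp only [hAx]
    rw [← Finset.mul_sum, hArow, hax]
  have hcol : ∀ j, ∑ i, Ax i j = px j := by
    intro j
    simp only [hAx]
    rw [hpx]
  refine ⟨?_, hform, hpos, hrow, hcol, ?_⟩
  · simp only [← hrow, ← hcol]
    exact Finset.sum_comm
  · rintro B _ ⟨u, v, hu, hv, hB⟩ hBr hBc
    have hlog : ∀ (r s t : ℝ), 0 < r → 0 < s → 0 < t →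
        Real.log (r * s * t) = Real.log r + Real.log s + Real.log t := by
      intro r s t hr hs ht
      rw [Real.log_mul (mul_pos hr hs).ne' ht.ne', Real.log_mul hr.ne' hs.ne']
    refine biprop_unique B Ax ?_ hpos (fun i => Real.log (u i) - Real.log (x i * x' i))
      (fun j => Real.log (v j) - Real.log (p' j)) ?_ ?_ ?_
    · intro i j
      rw [hB]
      exact mul_pos (mul_pos (hu i) (hM i j)) (hv j)
    · intro i j
      rw [hB, hform, hlog _ _ _ (hu i) (hM i j) (hv j),
        hlog _ _ _ (mul_pos (hx i) (hx' i)) (hM i j) (hp' j)]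
      ring
    · intro i
      rw [hBr, hrow]
    · intro j
      rw [hBc, hcol]
end
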